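/- In the process algebra 𝒢 built from a PCP instance INST: if INST has no solution, then ¬(X ≈ Y). -/

import Mathlib

/-!
The proof exhibits a winning strategy of the attacker in the weak bisimulation game from `X` and
`Y`, given that the instance has no solution.

Up to structural congruence, every process reachable from `X` or `Y` is a parallel composition of
threads, i.e. of sequences of constants, one of which is a control thread (`X`, `Y`, `D`, `C`, …).
`NF` is this normal form; `rep_fwd` and `rep_bwd` show that processes behave like the corresponding
configurations (`Conf`, `AStep`), and `Rel.run` transfers weak runs of configurations along a weak
bisimulation.

The attacker moves from `X` to `D ‖ G_v` by `λ_U`.  As `λ_V` is now possible, `Y` has to answer with a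
configuration in which `D` is accompanied by a thread `G_v V_{js} U_{is}` with `is` nonempty
(`Y_answer`).  The attacker changes sides, lets all other threads of this configuration terminate
(`kill_all`) and plays `λ_D`.  Now `λ_Z` is impossible before `λ_V`, so the answer of `D ‖ G_v`
contains no `G_u`, `G_v'` or `Z`; hence behind each of its `G_v` there are only constants `Vᵢ`
(`L2_shape`).  The attacker plays `λ_V`, which makes `λ_Z` possible, so that `Z V_{js} U_{is}` is
faced with a thread `Z V_{ws}` (`L3_shape`).

From here there are two tests (`final_eq`).  After `λ_I` the control constant `I` offers all
indices for ever and the letters can only come from threads; after `λ_S` the roles of letters and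
indices are interchanged.  On the attacker's side no other thread is active, so that an observed
label (a letter after `λ_I`, an index after `λ_S`) requires that `Z` is given up.  Hence the threads
next to `Z V_{ws}` are unable to perform such a label as well, and the longest observable word after
`λ_Z` is that of the guarded thread on both sides (`P1q.eq`).  The second test yields
`ws = js ++ is`, the first one `v_{ws} = v_{js} u_{is}`.  Cancelling `v_{js}` leaves
`v_{is} = u_{is}`, a solution of the instance.
-/

/-- The reflexive–transitive closure of the silent (`τ`) transitions of an LTS. -/
def SilentStar {S A : Type*} (tr : S → A → S → Prop) (τ : A) : S → S → Prop :=
  Relation.ReflTransGen (fun p q => tr p τ q)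

/-- `R` is a branching bisimulation for the LTS `tr` with silent label `τ`. -/
def IsBranchingBisim {S A : Type*} (tr : S → A → S → Prop) (τ : A)
    (R : S → S → Prop) : Prop :=
  ∀ P Q, R P Q →
    (∀ ℓ P', tr P ℓ P' →
      (ℓ = τ ∧ R P' Q) ∨
      ∃ Q'' Q', SilentStar tr τ Q Q'' ∧ tr Q'' ℓ Q' ∧ R P Q'' ∧ R P' Q') ∧
    (∀ ℓ Q', tr Q ℓ Q' →
      (ℓ = τ ∧ R P Q') ∨
      ∃ P'' P', SilentStar tr τ P P'' ∧ tr P'' ℓ P' ∧ R P'' Q ∧ R P' Q')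

/-- Branching bisimilarity: the union of all branching bisimulations. -/
def BrBisim {S A : Type*} (tr : S → A → S → Prop) (τ : A) (P Q : S) : Prop :=
  ∃ R, IsBranchingBisim tr τ R ∧ R P Q

/-- The weak step `P ⟹̂ℓ P'`. -/
def WeakStep {S A : Type*} (tr : S → A → S → Prop) (τ : A) (ℓ : A) (P P' : S) : Prop :=
  (ℓ = τ ∧ SilentStar tr τ P P') ∨
  (ℓ ≠ τ ∧ ∃ P₁ P₂, SilentStar tr τ P P₁ ∧ tr P₁ ℓ P₂ ∧ SilentStar tr τ P₂ P')

/-- `R` is a weak bisimulation for the LTS `tr` with silent label `τ`. -/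
def IsWeakBisim {S A : Type*} (tr : S → A → S → Prop) (τ : A)
    (R : S → S → Prop) : Prop :=
  ∀ P Q, R P Q →
    (∀ ℓ P', tr P ℓ P' → ∃ Q', WeakStep tr τ ℓ Q Q' ∧ R P' Q') ∧
    (∀ ℓ Q', tr Q ℓ Q' → ∃ P', WeakStep tr τ ℓ P P' ∧ R P' Q')

/-- Weak bisimilarity: the union of all weak bisimulations. -/
def WkBisim {S A : Type*} (tr : S → A → S → Prop) (τ : A) (P Q : S) : Prop :=
  ∃ R, IsWeakBisim tr τ R ∧ R P Q

/-- The process constants of the process algebra `𝒢` built from a PCP instance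
with `n` pairs of words over the alphabet `α`.  `W ω (some i)` stands for
`W(ω,i)` and `W ω none` for `W(ω,0)`. -/
inductive Cst (n : ℕ) (α : Type) : Type where
  | X | Y | Z | I | S | C | C' | D | G | G' | Gu | Gv | Gv'
  | U : Fin n → Cst n α
  | V : Fin n → Cst n α
  | W : List α → Option (Fin n) → Cst n α

/-- The labels of `𝒢`: `λ_U, λ_V, λ_D, λ_I, λ_S, λ_Z`, the indices `1,…,n`,
the letters of `α`, and the silent label `τ`. -/
inductive Lab (n : ℕ) (α : Type) : Type where
  | lU | lV | lD | lI | lS | lZ | tau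
  | idx : Fin n → Lab n α
  | ltr : α → Lab n α

/-- Processes: `ε`, constants, sequential and parallel composition. -/
inductive Proc (n : ℕ) (α : Type) : Type where
  | nil
  | cst : Cst n α → Proc n α
  | seq : Proc n α → Proc n α → Proc n α
  | par : Proc n α → Proc n α → Proc n α

/-- Shorthand for a constant viewed as a process. -/
def K {n : ℕ} {α : Type} (c : Cst n α) : Proc n α := Proc.cst c

/-- The raw transition rules of `𝒢` (from Fig. 3 of the paper), closed under
the structural rules for sequential (left) and parallel composition. -/
inductive Step {n : ℕ} {α : Type} (u v : Fin n → List α) :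
    Proc n α → Lab n α → Proc n α → Prop where
  | xU : Step u v (K .X) .lU (.par (K .D) (K .Gv))
  | xT : Step u v (K .X) .tau (K .D)
  | yT : Step u v (K .Y) .tau (K .D)
  | dT : Step u v (K .D) .tau (.par (K .D) (K .Gu))
  | dD : Step u v (K .D) .lD (K .C)
  | guT (i : Fin n) : Step u v (K .Gu) .tau (.seq (K .Gu) (K (.U i)))
  | guU (i : Fin n) : Step u v (K .Gu) .lU (.seq (K .Gv) (K (.U i)))
  | guGv' : Step u v (K .Gu) .tau (K .Gv')
  | gv'T (i : Fin n) : Step u v (K .Gv') .tau (.seq (K .Gv') (K (.V i)))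
  | gv'Z : Step u v (K .Gv') .tau (K .Z)
  | gvT (i : Fin n) : Step u v (K .Gv) .tau (.seq (K .Gv) (K (.V i)))
  | gvE : Step u v (K .Gv) .tau .nil
  | gvV : Step u v (K .Gv) .lV (K .Z)
  | zE : Step u v (K .Z) .tau .nil
  | zZ : Step u v (K .Z) .lZ .nil
  | cI : Step u v (K .C) .lI (K .I)
  | cS : Step u v (K .C) .lS (K .S)
  | cG : Step u v (K .C) .tau (.par (K .C) (K .G))
  | cGv : Step u v (K .C) .tau (.par (K .C) (K .Gv))
  | gU (i : Fin n) : Step u v (K .G) .tau (.seq (K .G) (K (.U i)))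
  | gV (i : Fin n) : Step u v (K .G) .tau (.seq (K .G) (K (.V i)))
  | gE : Step u v (K .G) .tau .nil
  | iC : Step u v (K .I) .lI (K .C')
  | iI (i : Fin n) : Step u v (K .I) (.idx i) (K .I)
  | sC : Step u v (K .S) .lS (K .C')
  | sS (a : α) : Step u v (K .S) (.ltr a) (K .S)
  | c'G : Step u v (K .C') .tau (.par (K .C') (K .G'))
  | c'E : Step u v (K .C') .tau .nil
  | g'U (i : Fin n) : Step u v (K .G') .tau (.seq (K .G') (K (.U i)))
  | g'V (i : Fin n) : Step u v (K .G') .tau (.seq (K .G') (K (.V i)))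
  | g'W (ω : List α) (k : Option (Fin n)) :
      Step u v (K .G') .tau (.seq (K .G') (K (.W ω k)))
  | g'Gv : Step u v (K .G') .tau (K .Gv)
  | g'Z : Step u v (K .G') .tau (K .Z)
  | uW (i : Fin n) : Step u v (K (.U i)) .tau (K (.W (u i) (some i)))
  | vW (i : Fin n) : Step u v (K (.V i)) .tau (K (.W (v i) (some i)))
  | wA (a : α) (ω : List α) (k : Option (Fin n)) :
      Step u v (K (.W (a :: ω) k)) (.ltr a) (K (.W ω k))
  | wI (ω : List α) (i : Fin n) :
      Step u v (K (.W ω (some i))) (.idx i) (K (.W ω none))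
  | wTa (a : α) (ω : List α) (k : Option (Fin n)) :
      Step u v (K (.W (a :: ω) k)) .tau (K (.W ω k))
  | wTi (ω : List α) (i : Fin n) :
      Step u v (K (.W ω (some i))) .tau (K (.W ω none))
  | wE : Step u v (K (.W [] none)) .tau .nil
  | seqL {P ℓ P'} (Q) : Step u v P ℓ P' → Step u v (.seq P Q) ℓ (.seq P' Q)
  | parL {P ℓ P'} (Q) : Step u v P ℓ P' → Step u v (.par P Q) ℓ (.par P' Q)
  | parR {Q ℓ Q'} (P) : Step u v Q ℓ Q' → Step u v (.par P Q) ℓ (.par P Q')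

/-- Structural congruence: sequential composition is associative, parallel
composition is associative and commutative, and `ε` is a unit for both. -/
inductive SC {n : ℕ} {α : Type} : Proc n α → Proc n α → Prop where
  | refl (P) : SC P P
  | symm {P Q} : SC P Q → SC Q P
  | trans {P Q R} : SC P Q → SC Q R → SC P R
  | seqCong {P P' Q Q'} : SC P P' → SC Q Q' → SC (.seq P Q) (.seq P' Q')
  | parCong {P P' Q Q'} : SC P P' → SC Q Q' → SC (.par P Q) (.par P' Q')
  | seqAssoc (P Q R) : SC (.seq (.seq P Q) R) (.seq P (.seq Q R))
  | parAssoc (P Q R) : SC (.par (.par P Q) R) (.par P (.par Q R))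
  | parComm (P Q) : SC (.par P Q) (.par Q P)
  | seqNilL (P) : SC (.seq .nil P) P
  | seqNilR (P) : SC (.seq P .nil) P
  | parNil (P) : SC (.par .nil P) P

/-- The transition relation of `𝒢`: the raw steps taken up to structural
congruence of processes. -/
def GTrans {n : ℕ} {α : Type} (u v : Fin n → List α) :
    Proc n α → Lab n α → Proc n α → Prop :=
  fun P ℓ Q => ∃ P' Q', SC P P' ∧ Step u v P' ℓ Q' ∧ SC Q' Q

/-- Sequential composition of a list of constants (`ε` for the empty list). -/
def seqComp {n : ℕ} {α : Type} (l : List (Cst n α)) : Proc n α :=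
  l.foldr (fun c P => .seq (.cst c) P) .nil

/-- `c` is one of the constants `U₁,…,Uₙ,V₁,…,Vₙ`. -/
def IsUV {n : ℕ} {α : Type} (c : Cst n α) : Prop :=
  (∃ i, c = Cst.U i) ∨ (∃ i, c = Cst.V i)

/-- `c` is a `W`-constant of `𝒢`, i.e. `W(ω,i)` or `W(ω,0)` with `ω` a suffix
of some `uᵢ` or `vᵢ`. -/
def IsW {n : ℕ} {α : Type} (u v : Fin n → List α) (c : Cst n α) : Prop :=
  ∃ ω k, c = Cst.W ω k ∧ ∃ i, (ω <:+ u i ∨ ω <:+ v i)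

/-- `c` is a `U`-, `V`- or `W`-constant of `𝒢`. -/
def IsUVW {n : ℕ} {α : Type} (u v : Fin n → List α) (c : Cst n α) : Prop :=
  IsUV c ∨ IsW u v c

/-- The PCP instance `(u₁,v₁),…,(uₙ,vₙ)` has a solution. -/
def HasSolution {n : ℕ} {α : Type} (u v : Fin n → List α) : Prop :=
  ∃ is : List (Fin n), is ≠ [] ∧ (is.map u).flatten = (is.map v).flatten

namespace PCPGame

variable {n : ℕ} {α : Type}

/-! ### Thread normal forms of processes -/

/-- The multiset of threads consisting of the single thread `l`; the empty thread is dropped. -/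
def single (l : List (Cst n α)) : Multiset (List (Cst n α)) :=
  Multiset.filter (fun t => t ≠ []) {l}

/-- Dropping the empty threads of a multiset of threads. -/
def clean (T : Multiset (List (Cst n α))) : Multiset (List (Cst n α)) :=
  T.filter (fun t => t ≠ [])

lemma single_nil : single ([] : List (Cst n α)) = 0 := by
  simp [single]

lemma single_of_ne {l : List (Cst n α)} (h : l ≠ []) : single l = {l} := by
  simp [single, Multiset.filter_singleton, h]

lemma clean_cons (l : List (Cst n α)) (T : Multiset (List (Cst n α))) :
    clean (l ::ₘ T) = single l + clean T := by
  unfold clean single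
  rw [← Multiset.singleton_add, Multiset.filter_add]

lemma clean_add (S T : Multiset (List (Cst n α))) : clean (S + T) = clean S + clean T := by
  simp [clean, Multiset.filter_add]

/-- `NF P M`: the structural congruence class of `P` is the parallel composition of the nonempty
threads in `M`, a thread being a sequential composition of constants.  A proper parallel
composition inside a proper sequential one has no normal form. -/
inductive NF : Proc n α → Multiset (List (Cst n α)) → Prop
  | nil : NF .nil 0
  | cst (c) : NF (.cst c) {[c]}
  | par {P Q A B} : NF P A → NF Q B → NF (.par P Q) (A + B)
  | seqL {P Q B} : NF P 0 → NF Q B → NF (.seq P Q) B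
  | seqR {P Q A} : NF P A → NF Q 0 → NF (.seq P Q) A
  | seq {P Q a b} : NF P {a} → NF Q {b} → NF (.seq P Q) {a ++ b}

lemma NF.ne_nil {P : Proc n α} {M} (h : NF P M) : ∀ t ∈ M, t ≠ [] := by
  induction h with
  | nil => simp
  | cst c => simp
  | par _ _ h1 h2 =>
    intro t ht
    rcases Multiset.mem_add.1 ht with h | h
    exacts [h1 t h, h2 t h]
  | seqL _ _ _ h2 => exact h2
  | seqR _ _ h1 _ => exact h1
  | seq _ _ h1 h2 => simp_all

lemma NF.zero_sc {P : Proc n α} {M} (h : NF P M) : M = 0 → SC P .nil := by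
  induction h with
  | nil => exact fun _ => .refl _
  | cst c => simp
  | par _ _ h1 h2 =>
    intro h
    rw [add_eq_zero] at h
    exact (SC.parCong (h1 h.1) (h2 h.2)).trans (.parNil _)
  | seqL _ _ h1 h2 => exact fun h => (SC.seqCong (h1 rfl) (h2 h)).trans (.seqNilL _)
  | seqR _ _ h1 h2 => exact fun h => (SC.seqCong (h1 h) (h2 rfl)).trans (.seqNilL _)
  | seq _ _ h1 h2 => simp

/-- Normal forms do not depend on the representative of a structural congruence class. -/
lemma NF.sc {P Q : Proc n α} (h : SC P Q) : ∀ M, NF P M ↔ NF Q M := by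
  induction h with
  | refl P => exact fun _ => Iff.rfl
  | symm _ ih => exact fun M => (ih M).symm
  | trans _ _ h1 h2 => exact fun M => (h1 M).trans (h2 M)
  | seqCong _ _ h1 h2 =>
    intro M
    constructor
    · intro h
      cases h with
      | seqL a b => exact .seqL ((h1 _).1 a) ((h2 _).1 b)
      | seqR a b => exact .seqR ((h1 _).1 a) ((h2 _).1 b)
      | seq a b => exact .seq ((h1 _).1 a) ((h2 _).1 b)
    · intro h
      cases h with
      | seqL a b => exact .seqL ((h1 _).2 a) ((h2 _).2 b)
      | seqR a b => exact .seqR ((h1 _).2 a) ((h2 _).2 b)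
      | seq a b => exact .seq ((h1 _).2 a) ((h2 _).2 b)
  | parCong _ _ h1 h2 =>
    intro M
    constructor
    · intro h
      cases h with
      | par a b => exact .par ((h1 _).1 a) ((h2 _).1 b)
    · intro h
      cases h with
      | par a b => exact .par ((h1 _).2 a) ((h2 _).2 b)
  | seqAssoc P Q R =>
    intro M
    constructor
    · intro h
      cases h with
      | seqL a b =>
        generalize hz : (0 : Multiset (List (Cst n α))) = z at a
        cases a with
        | seqL a a' => subst hz; exact .seqL a (.seqL a' b)
        | seqR a a' => subst hz; exact .seqL a (.seqL a' b)
        | seq a a' => exact absurd hz (by simp)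
      | seqR a b =>
        cases a with
        | seqL a a' => exact .seqL a (.seqR a' b)
        | seqR a a' => exact .seqR a (.seqR a' b)
        | seq a a' => exact .seq a (.seqR a' b)
      | @seq _ _ x y a b =>
        generalize hz : ({x} : Multiset (List (Cst n α))) = z at a
        cases a with
        | seqL a a' => subst hz; exact .seqL a (.seq a' b)
        | seqR a a' => subst hz; exact .seq a (.seqL a' b)
        | seq a a' =>
          rw [Multiset.singleton_inj] at hz
          subst hz
          rw [List.append_assoc]
          exact .seq a (.seq a' b)
    · intro h
      cases h with
      | seqR b a =>
        generalize hz : (0 : Multiset (List (Cst n α))) = z at a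
        cases a with
        | seqL a a' => subst hz; exact .seqR (.seqR b a) a'
        | seqR a a' => subst hz; exact .seqR (.seqR b a) a'
        | seq a a' => exact absurd hz (by simp)
      | seqL b a =>
        cases a with
        | seqL a a' => exact .seqL (.seqL b a) a'
        | seqR a a' => exact .seqR (.seqL b a) a'
        | seq a a' => exact .seq (.seqL b a) a'
      | @seq _ _ x y b a =>
        generalize hz : ({y} : Multiset (List (Cst n α))) = z at a
        cases a with
        | seqL a a' => subst hz; exact .seq (.seqR b a) a'
        | seqR a a' => subst hz; exact .seqR (.seq b a) a'
        | seq a a' =>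
          rw [Multiset.singleton_inj] at hz
          subst hz
          rw [← List.append_assoc]
          exact .seq (.seq b a) a'
  | parAssoc P Q R =>
    intro M
    constructor
    · intro h
      cases h with
      | par a b =>
        cases a with
        | par a a' => rw [add_assoc]; exact .par a (.par a' b)
    · intro h
      cases h with
      | par a b =>
        cases b with
        | par b b' => rw [← add_assoc]; exact .par (.par a b) b'
  | parComm P Q =>
    intro M
    constructor <;> intro h <;> cases h with
      | par a b => rw [add_comm]; exact .par b a
  | seqNilL P =>
    intro M
    constructor
    · intro h
      cases h with
      | seqL a b => exact b
      | seqR a b => cases a; exact b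
      | @seq _ _ x y a b =>
        generalize hz : ({x} : Multiset (List (Cst n α))) = z at a
        cases a
        exact absurd hz (by simp)
    · exact fun h => .seqL .nil h
  | seqNilR P =>
    intro M
    constructor
    · intro h
      cases h with
      | seqR a b => exact a
      | seqL a b => cases b; exact a
      | @seq _ _ x y a b =>
        generalize hz : ({y} : Multiset (List (Cst n α))) = z at b
        cases b
        exact absurd hz (by simp)
    · exact fun h => .seqR h .nil
  | parNil P =>
    intro M
    constructor
    · intro h
      cases h with
      | par a b => cases a; simpa using b
    · intro h
      have := NF.par .nil h
      simpa using this

/-- A transition of a process in normal form is a transition of the head constant `c` of one of its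
threads `c :: l`.  The two descriptions of the target cover the rules without and with parallel
composition on the right-hand side. -/
lemma step_nf {u v : Fin n → List α} {P P' : Proc n α} {ℓ} (h : Step u v P ℓ P') :
    ∀ M, NF P M → ∃ c l M0 Q, M = (c :: l) ::ₘ M0 ∧ Step u v (K c) ℓ Q ∧
      (∀ r, NF Q (single r) → NF P' (single (r ++ l) + M0)) ∧
      (l = [] → ∀ A, NF Q A → NF P' (A + M0)) := by
  induction h with
  | @seqL P ℓ P' R hs ih =>
    intro M hM
    cases hM with
    | seqL a b =>
      obtain ⟨c, l, M0, Q, h1, _⟩ := ih _ a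
      exact absurd h1.symm (Multiset.cons_ne_zero)
    | seqR a b =>
      obtain ⟨c, l, M0, Q, h1, h2, h3, h4⟩ := ih _ a
      exact ⟨c, l, M0, Q, h1, h2, fun r hr => .seqR (h3 r hr) b,
        fun hl A hA => .seqR (h4 hl A hA) b⟩
    | @seq _ _ x y a b =>
      obtain ⟨c, l, M0, Q, h1, h2, h3, h4⟩ := ih _ a
      have hy : y ≠ [] := b.ne_nil y (by simp)
      have h5 : x = c :: l ∧ M0 = 0 := by
        rw [← Multiset.cons_zero, Multiset.cons_eq_cons] at h1
        rcases h1 with h | ⟨_, cs, h, _⟩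
        · exact ⟨h.1, h.2.symm⟩
        · exact absurd h.symm Multiset.cons_ne_zero
      obtain ⟨rfl, rfl⟩ := h5
      refine ⟨c, l ++ y, 0, Q, by simp, h2, fun r hr => ?_, fun h => by simp [hy] at h⟩
      have h6 := h3 r hr
      rw [add_zero] at h6 ⊢
      rw [← List.append_assoc]
      by_cases h7 : r ++ l = []
      · rw [h7] at h6 ⊢
        rw [single_nil] at h6
        rw [List.nil_append, single_of_ne hy]
        exact .seqL h6 b
      · rw [single_of_ne h7] at h6
        rw [single_of_ne (by simp [hy])]
        exact .seq h6 b
  | @parL P ℓ P' R hs ih =>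
    intro M hM
    cases hM with
    | @par _ _ A B a b =>
      obtain ⟨c, l, M0, Q, h1, h2, h3, h4⟩ := ih _ a
      refine ⟨c, l, M0 + B, Q, by rw [h1, Multiset.cons_add], h2, fun r hr => ?_,
        fun hl A hA => ?_⟩
      · rw [← add_assoc]; exact .par (h3 r hr) b
      · rw [← add_assoc]; exact .par (h4 hl A hA) b
  | @parR P ℓ P' R hs ih =>
    intro M hM
    cases hM with
    | @par _ _ A B a b =>
      obtain ⟨c, l, M0, Q, h1, h2, h3, h4⟩ := ih _ b
      refine ⟨c, l, A + M0, Q, by rw [h1, Multiset.add_cons], h2, fun r hr => ?_,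
        fun hl A' hA => ?_⟩
      · rw [add_left_comm]; exact .par a (h3 r hr)
      · rw [add_left_comm]; exact .par a (h4 hl A' hA)
  | _ =>
    intro M hM
    cases hM
    refine ⟨_, [], 0, _, rfl, ?_, fun r hr => by simpa using hr, fun _ A hA => by simpa using hA⟩
    constructor

/-- Every transition of the head constant of a thread is available in the process, up to
structural congruence. -/
lemma nf_step {u v : Fin n → List α} {c : Cst n α} {ℓ} {Q : Proc n α}
    (hs : Step u v (K c) ℓ Q) {P : Proc n α} {M} (h : NF P M) :
    ∀ l M0, M = (c :: l) ::ₘ M0 → ∃ P0 P', SC P P0 ∧ Step u v P0 ℓ P' ∧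
      (∀ r, NF Q (single r) → NF P' (single (r ++ l) + M0)) ∧
      (l = [] → ∀ A, NF Q A → NF P' (A + M0)) := by
  induction h with
  | nil => exact fun l M0 h => absurd h.symm Multiset.cons_ne_zero
  | cst d =>
    intro l M0 h
    rw [← Multiset.cons_zero, Multiset.cons_eq_cons] at h
    rcases h with ⟨h, h'⟩ | ⟨_, cs, h, _⟩
    · obtain ⟨rfl, rfl⟩ := List.cons.inj h
      subst h'
      exact ⟨_, _, .refl _, hs, fun r hr => by simpa using hr, fun _ A hA => by simpa using hA⟩
    · exact absurd h.symm Multiset.cons_ne_zero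
  | @par P1 P2 A B a b iha ihb =>
    intro l M0 h
    have hm : (c :: l) ∈ A + B := by rw [h]; simp
    rcases Multiset.mem_add.1 hm with hm | hm
    · obtain ⟨A', rfl⟩ := Multiset.exists_cons_of_mem hm
      rw [Multiset.cons_add, Multiset.cons_inj_right] at h
      obtain ⟨P0, P', h1, h2, h3, h4⟩ := iha l A' rfl
      subst h
      refine ⟨_, _, .parCong h1 (.refl _), .parL _ h2, fun r hr => ?_, fun hl A hA => ?_⟩
      · rw [← add_assoc]; exact .par (h3 r hr) b
      · rw [← add_assoc]; exact .par (h4 hl A hA) b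
    · obtain ⟨B', rfl⟩ := Multiset.exists_cons_of_mem hm
      rw [Multiset.add_cons, Multiset.cons_inj_right] at h
      obtain ⟨P0, P', h1, h2, h3, h4⟩ := ihb l B' rfl
      subst h
      refine ⟨_, _, .parCong (.refl _) h1, .parR _ h2, fun r hr => ?_, fun hl A' hA => ?_⟩
      · rw [add_left_comm]; exact .par a (h3 r hr)
      · rw [add_left_comm]; exact .par a (h4 hl A' hA)
  | seqL a b iha ihb =>
    intro l M0 h
    obtain ⟨P0, P', h1, h2⟩ := ihb l M0 h
    exact ⟨P0, P', ((SC.seqCong (a.zero_sc rfl) (.refl _)).trans (.seqNilL _)).trans h1, h2⟩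
  | seqR a b iha ihb =>
    intro l M0 h
    obtain ⟨P0, P', h1, h2⟩ := iha l M0 h
    exact ⟨P0, P', ((SC.seqCong (.refl _) (b.zero_sc rfl)).trans (.seqNilR _)).trans h1, h2⟩
  | @seq P1 P2 x y a b iha ihb =>
    intro l M0 h
    rw [← Multiset.cons_zero, Multiset.cons_eq_cons] at h
    rcases h with ⟨h, h'⟩ | ⟨_, cs, h, _⟩
    · subst h'
      have hy : y ≠ [] := b.ne_nil y (by simp)
      cases x with
      | nil => exact absurd rfl (a.ne_nil [] (by simp))
      | cons d x =>
        rw [List.cons_append, List.cons.injEq] at h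
        obtain ⟨rfl, rfl⟩ := h
        obtain ⟨P0, P', h1, h2, h3, h4⟩ := iha x 0 rfl
        refine ⟨_, _, .seqCong h1 (.refl _), .seqL _ h2, fun r hr => ?_,
          fun h => by simp [hy] at h⟩
        have h6 := h3 r hr
        rw [add_zero] at h6 ⊢
        rw [← List.append_assoc]
        by_cases h7 : r ++ x = []
        · rw [h7] at h6 ⊢
          rw [single_nil] at h6
          rw [List.nil_append, single_of_ne hy]
          exact .seqL h6 b
        · rw [single_of_ne h7] at h6
          rw [single_of_ne (by simp [hy])]
          exact .seq h6 b
    · exact absurd h.symm Multiset.cons_ne_zero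

/-! ### The transition system of thread configurations -/

/-- The control constants, which only ever occur as a thread of their own. -/
def isMain : Cst n α → Bool
  | .X | .Y | .I | .S | .C | .C' | .D => true
  | _ => false

/-- The constants `Uᵢ`, `Vᵢ` and `W(ω,i)`, which occur in the tails of threads. -/
def isTail : Cst n α → Bool
  | .U _ | .V _ | .W _ _ => true
  | _ => false

/-- The rules of the constants that are not control constants: the head `c` of a thread is replaced
by the sequence `r`. -/
inductive TRule (u v : Fin n → List α) : Cst n α → Lab n α → List (Cst n α) → Prop
  | guT (i : Fin n) : TRule u v .Gu .tau [.Gu, .U i]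
  | guU (i : Fin n) : TRule u v .Gu .lU [.Gv, .U i]
  | guGvp : TRule u v .Gu .tau [.Gv']
  | gvpT (i : Fin n) : TRule u v .Gv' .tau [.Gv', .V i]
  | gvpZ : TRule u v .Gv' .tau [.Z]
  | gvT (i : Fin n) : TRule u v .Gv .tau [.Gv, .V i]
  | gvE : TRule u v .Gv .tau []
  | gvV : TRule u v .Gv .lV [.Z]
  | zE : TRule u v .Z .tau []
  | zZ : TRule u v .Z .lZ []
  | gU (i : Fin n) : TRule u v .G .tau [.G, .U i]
  | gV (i : Fin n) : TRule u v .G .tau [.G, .V i]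
  | gE : TRule u v .G .tau []
  | g'U (i : Fin n) : TRule u v .G' .tau [.G', .U i]
  | g'V (i : Fin n) : TRule u v .G' .tau [.G', .V i]
  | g'W (ω : List α) (k : Option (Fin n)) : TRule u v .G' .tau [.G', .W ω k]
  | g'Gv : TRule u v .G' .tau [.Gv]
  | g'Z : TRule u v .G' .tau [.Z]
  | uW (i : Fin n) : TRule u v (.U i) .tau [.W (u i) (some i)]
  | vW (i : Fin n) : TRule u v (.V i) .tau [.W (v i) (some i)]
  | wA (a : α) (ω : List α) (k : Option (Fin n)) : TRule u v (.W (a :: ω) k) (.ltr a) [.W ω k]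
  | wI (ω : List α) (i : Fin n) : TRule u v (.W ω (some i)) (.idx i) [.W ω none]
  | wTa (a : α) (ω : List α) (k : Option (Fin n)) : TRule u v (.W (a :: ω) k) .tau [.W ω k]
  | wTi (ω : List α) (i : Fin n) : TRule u v (.W ω (some i)) .tau [.W ω none]
  | wE : TRule u v (.W [] none) .tau []

/-- The rules of the control constants: the control thread becomes `m`, and the threads `s` are
spawned in parallel. -/
inductive MRule : Cst n α → Lab n α → List (Cst n α) → Multiset (List (Cst n α)) → Prop
  | xU : MRule .X .lU [.D] {[.Gv]}
  | xT : MRule .X .tau [.D] 0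
  | yT : MRule .Y .tau [.D] 0
  | dT : MRule .D .tau [.D] {[.Gu]}
  | dD : MRule .D .lD [.C] 0
  | cI : MRule .C .lI [.I] 0
  | cS : MRule .C .lS [.S] 0
  | cG : MRule .C .tau [.C] {[.G]}
  | cGv : MRule .C .tau [.C] {[.Gv]}
  | iC : MRule .I .lI [.C'] 0
  | iI (i : Fin n) : MRule .I (.idx i) [.I] 0
  | sC : MRule .S .lS [.C'] 0
  | sS (a : α) : MRule .S (.ltr a) [.S] 0
  | c'G : MRule .C' .tau [.C'] {[.G']}
  | c'E : MRule .C' .tau [] 0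

lemma NF.single1 (c : Cst n α) : NF (K c) (single [c]) := by
  rw [single_of_ne (by simp)]; exact .cst c

lemma NF.single2 (c d : Cst n α) : NF (.seq (K c) (K d)) (single [c, d]) := by
  rw [single_of_ne (by simp)]; exact .seq (.cst c) (.cst d)

lemma NF.single0 : NF (.nil : Proc n α) (single []) := by
  rw [single_nil]; exact .nil

lemma NF.main1 (c : Cst n α) : NF (K c) (clean ([c] ::ₘ 0)) := by
  rw [clean_cons]; simpa [clean] using NF.single1 c

lemma NF.main2 (c d : Cst n α) : NF (.par (K c) (K d)) (clean ([c] ::ₘ {[d]})) := by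
  rw [clean_cons]; refine .par (.single1 c) ?_
  have := NF.single1 d
  simpa [clean, single] using this

lemma NF.main0 : NF (.nil : Proc n α) (clean ([] ::ₘ 0)) := by
  rw [clean_cons]; simpa [clean] using NF.single0

lemma step_cst {u v : Fin n → List α} {c : Cst n α} {ℓ} {Q} (h : Step u v (K c) ℓ Q) :
    (isMain c = false ∧ ∃ r, TRule u v c ℓ r ∧ NF Q (single r)) ∨
    (isMain c = true ∧ ∃ m s, MRule c ℓ m s ∧ NF Q (clean (m ::ₘ s))) := by
  generalize hP : K c = P at h
  cases h <;> cases hP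
  all_goals first
    | exact .inl ⟨rfl, _, by constructor, .single1 _⟩
    | exact .inl ⟨rfl, _, by constructor, .single2 _ _⟩
    | exact .inl ⟨rfl, _, by constructor, .single0⟩
    | exact .inr ⟨rfl, _, _, by constructor, .main1 _⟩
    | exact .inr ⟨rfl, _, _, by constructor, .main2 _ _⟩
    | exact .inr ⟨rfl, _, _, by constructor, .main0⟩

lemma TRule.step {u v : Fin n → List α} {c : Cst n α} {ℓ} {r} (h : TRule u v c ℓ r) :
    ∃ Q, Step u v (K c) ℓ Q ∧ NF Q (single r) := by
  cases h
  all_goals first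
    | exact ⟨_, by constructor, .single1 _⟩
    | exact ⟨_, by constructor, .single2 _ _⟩
    | exact ⟨_, by constructor, .single0⟩

lemma MRule.step {u v : Fin n → List α} {c : Cst n α} {ℓ} {m s} (h : MRule c ℓ m s) :
    ∃ Q, Step u v (K c) ℓ Q ∧ NF Q (clean (m ::ₘ s)) := by
  cases h
  all_goals first
    | exact ⟨_, by constructor, .main1 _⟩
    | exact ⟨_, by constructor, .main2 _ _⟩
    | exact ⟨_, by constructor, .main0⟩

/-- A configuration: the control thread together with the other threads.  Threads that have
terminated are kept as empty lists. -/
abbrev Conf (n : ℕ) (α : Type) := List (Cst n α) × Multiset (List (Cst n α))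

/-- Transitions of configurations. -/
inductive AStep (u v : Fin n → List α) : Conf n α → Lab n α → Conf n α → Prop
  | main {c ℓ m s} (T) : MRule c ℓ m s → AStep u v ([c], T) ℓ (m, s + T)
  | thr {c ℓ r} (m l T) : TRule u v c ℓ r → AStep u v (m, (c :: l) ::ₘ T) ℓ (m, (r ++ l) ::ₘ T)

/-- Control constants occur in the control thread only, which has at most one constant. -/
def Good (s : Conf n α) : Prop :=
  (s.1 = [] ∨ ∃ c, isMain c = true ∧ s.1 = [c]) ∧ ∀ t ∈ s.2, ∀ c ∈ t, isMain c = false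

/-- The process `P` is represented by the configuration `s`. -/
def Rep (P : Proc n α) (s : Conf n α) : Prop :=
  Good s ∧ NF P (clean (s.1 ::ₘ s.2))

lemma AStep.good {u v : Fin n → List α} {s s' : Conf n α} {ℓ} (h : AStep u v s ℓ s')
    (hs : Good s) : Good s' := by
  cases h with
  | main T h =>
    obtain ⟨h1, h2⟩ := hs
    cases h <;> refine ⟨by simp [isMain], ?_⟩ <;> simpa [isMain] using h2
  | thr m l T h =>
    obtain ⟨h1, h2⟩ := hs
    refine ⟨h1, ?_⟩
    simp only [Multiset.mem_cons, forall_eq_or_imp, List.mem_cons, List.mem_append] at h2 ⊢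
    refine ⟨?_, h2.2⟩
    rintro c (hc | hc)
    · cases h <;> simp at hc <;> rcases hc with rfl | rfl <;> rfl
    · exact h2.1.2 c hc

/-- Transitions of a represented process are transitions of its configuration. -/
lemma rep_fwd {u v : Fin n → List α} {P P' : Proc n α} {ℓ} {s : Conf n α}
    (hr : Rep P s) (h : GTrans u v P ℓ P') : ∃ s', AStep u v s ℓ s' ∧ Rep P' s' := by
  suffices ∃ s', AStep u v s ℓ s' ∧ NF P' (clean (s'.1 ::ₘ s'.2)) by
    obtain ⟨s', h1, h2⟩ := this
    exact ⟨s', h1, h1.good hr.1, h2⟩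
  obtain ⟨P1, P2, hsc, hst, hsc'⟩ := h
  obtain ⟨hg, hn⟩ := hr
  obtain ⟨m, T⟩ := s
  rw [NF.sc hsc] at hn
  obtain ⟨c, l, M0, Q, h1, h2, h3, h4⟩ := step_nf hst _ hn
  simp only at h1
  have hmem : (c :: l) ∈ m ::ₘ T := Multiset.mem_of_mem_filter (by
    change _ ∈ clean (m ::ₘ T); rw [h1]; simp)
  rcases Multiset.mem_cons.1 hmem with rfl | hmem
  · rcases hg.1 with h | ⟨d, hd, h⟩
    · simp at h
    · simp only [List.cons.injEq] at h
      obtain ⟨rfl, rfl⟩ := h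
      rw [clean_cons, single_of_ne (by simp), Multiset.singleton_add,
        Multiset.cons_inj_right] at h1
      rcases step_cst h2 with ⟨h, _⟩ | ⟨_, m', s, hm, hQ⟩
      · rw [hd] at h; cases h
      · refine ⟨_, .main T hm, (NF.sc hsc' _).1 ?_⟩
        have := h4 rfl _ hQ
        rwa [← h1, ← clean_add, Multiset.cons_add] at this
  · obtain ⟨T, rfl⟩ := Multiset.exists_cons_of_mem hmem
    have hc := hg.2 (c :: l) (by simp) c (by simp)
    rw [Multiset.cons_swap, clean_cons, single_of_ne (by simp), Multiset.singleton_add,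
      Multiset.cons_inj_right] at h1
    rcases step_cst h2 with ⟨_, r, ht, hQ⟩ | ⟨h, _⟩
    · refine ⟨_, .thr m l T ht, (NF.sc hsc' _).1 ?_⟩
      have := h3 _ hQ
      rw [← h1] at this
      rwa [Multiset.cons_swap, clean_cons]
    · rw [hc] at h; cases h

/-- Transitions of a configuration are realised by every process it represents. -/
lemma rep_bwd {u v : Fin n → List α} {P : Proc n α} {ℓ} {s s' : Conf n α}
    (hr : Rep P s) (h : AStep u v s ℓ s') : ∃ P', GTrans u v P ℓ P' ∧ Rep P' s' := by
  suffices ∃ P', GTrans u v P ℓ P' ∧ NF P' (clean (s'.1 ::ₘ s'.2)) by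
    obtain ⟨P', h1, h2⟩ := this
    exact ⟨P', h1, h.good hr.1, h2⟩
  obtain ⟨hg, hn⟩ := hr
  cases h with
  | @main c ℓ m s T h =>
    obtain ⟨Q, hQ, hQ'⟩ := h.step (u := u) (v := v)
    obtain ⟨P0, P', h1, h2, h3, h4⟩ := nf_step hQ hn [] (clean T)
      (by rw [clean_cons, single_of_ne (by simp), Multiset.singleton_add])
    refine ⟨P', ⟨P0, P', h1, h2, .refl _⟩, ?_⟩
    have := h4 rfl _ hQ'
    rwa [← clean_add, Multiset.cons_add] at this
  | @thr c ℓ r m l T h =>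
    obtain ⟨Q, hQ, hQ'⟩ := h.step
    obtain ⟨P0, P', h1, h2, h3, h4⟩ := nf_step hQ hn l (clean (m ::ₘ T))
      (by rw [Multiset.cons_swap, clean_cons, single_of_ne (by simp), Multiset.singleton_add])
    refine ⟨P', ⟨P0, P', h1, h2, .refl _⟩, ?_⟩
    have := h3 _ hQ'
    rwa [← clean_cons, Multiset.cons_swap] at this

/-! ### Weak runs and their transfer along a weak bisimulation -/

/-- `Run s w s'`: there is a run from `s` to `s'` whose sequence of visible labels is `w`. -/
inductive Run (u v : Fin n → List α) : Conf n α → List (Lab n α) → Conf n α → Prop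
  | nil (s) : Run u v s [] s
  | tau {s s1 s2 w} : AStep u v s .tau s1 → Run u v s1 w s2 → Run u v s w s2
  | vis {s s1 s2 ℓ w} : ℓ ≠ .tau → AStep u v s ℓ s1 → Run u v s1 w s2 → Run u v s (ℓ :: w) s2

lemma Run.trans {u v : Fin n → List α} {s s1 s2 : Conf n α} {w w'}
    (h : Run u v s w s1) (h' : Run u v s1 w' s2) : Run u v s (w ++ w') s2 := by
  induction h with
  | nil => exact h'
  | tau h _ ih => exact .tau h (ih h')
  | vis hl h _ ih => exact .vis hl h (ih h')

lemma Run.cons_inv {u v : Fin n → List α} {s s' : Conf n α} {ℓ w}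
    (h : Run u v s (ℓ :: w) s') :
    ∃ s1 s2, Run u v s [] s1 ∧ ℓ ≠ .tau ∧ AStep u v s1 ℓ s2 ∧ Run u v s2 w s' := by
  generalize hw : ℓ :: w = w' at h
  induction h with
  | nil => cases hw
  | tau h _ ih =>
    obtain ⟨s1, s2, h1, h2⟩ := ih hw
    exact ⟨s1, s2, .tau h h1, h2⟩
  | vis hl h h' =>
    cases hw
    exact ⟨_, _, .nil _, hl, h, h'⟩

lemma Run.inv {u v : Fin n → List α} {s s' : Conf n α} {p : Conf n α → Prop}
    (hp : ∀ s s', p s → AStep u v s .tau s' → p s') (hs : p s) (h : Run u v s [] s') : p s' := by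
  generalize hw : [] = w at h
  induction h with
  | nil => exact hs
  | tau h _ ih => exact ih (hp _ _ hs h) hw
  | vis => cases hw

/-- Runs are not affected by an additional idle thread. -/
lemma Run.frame {u v : Fin n → List α} {s s' : Conf n α} {w} (h : Run u v s w s')
    (t : List (Cst n α)) : Run u v (s.1, t ::ₘ s.2) w (s'.1, t ::ₘ s'.2) := by
  have key : ∀ {s s' : Conf n α} {ℓ}, AStep u v s ℓ s' →
      AStep u v (s.1, t ::ₘ s.2) ℓ (s'.1, t ::ₘ s'.2) := by
    intro s s' ℓ h
    cases h with
    | main T h => simpa using AStep.main (u := u) (v := v) (t ::ₘ T) h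
    | @thr c ℓ r m l T h =>
      have := AStep.thr m l (t ::ₘ T) h
      rwa [Multiset.cons_swap, Multiset.cons_swap _ t] at this
  induction h with
  | nil => exact .nil _
  | tau h _ ih => exact .tau (key h) ih
  | vis hl h _ ih => exact .vis hl (key h) ih

/-- The relation on configurations induced by a relation on processes. -/
def Rel (R : Proc n α → Proc n α → Prop) (s t : Conf n α) : Prop :=
  ∃ P Q, Rep P s ∧ Rep Q t ∧ R P Q

lemma Rel.flip {R : Proc n α → Proc n α → Prop} {s t : Conf n α} (h : Rel R s t) :
    Rel (flip R) t s := by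
  obtain ⟨P, Q, h1, h2, h3⟩ := h
  exact ⟨Q, P, h2, h1, h3⟩

lemma bisim_flip {u v : Fin n → List α} {R : Proc n α → Proc n α → Prop}
    (h : IsWeakBisim (GTrans u v) .tau R) : IsWeakBisim (GTrans u v) .tau (flip R) :=
  fun P Q hPQ => ⟨(h Q P hPQ).2, (h Q P hPQ).1⟩

lemma silent_run {u v : Fin n → List α} {P P' : Proc n α}
    (h : SilentStar (GTrans u v) .tau P P') :
    ∀ {s}, Rep P s → ∃ s', Run u v s [] s' ∧ Rep P' s' := by
  unfold SilentStar at h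
  induction h using Relation.ReflTransGen.head_induction_on with
  | refl => exact fun h => ⟨_, .nil _, h⟩
  | head h _ ih =>
    intro s hs
    obtain ⟨s1, h1, h2⟩ := rep_fwd hs h
    obtain ⟨s2, h3, h4⟩ := ih h2
    exact ⟨s2, .tau h1 h3, h4⟩

/-- Related configurations have the same weak runs, to related configurations. -/
lemma Rel.run {u v : Fin n → List α} {R : Proc n α → Proc n α → Prop}
    (hR : IsWeakBisim (GTrans u v) .tau R) {s s' : Conf n α} {w} (h : Run u v s w s') :
    ∀ {t}, Rel R s t → ∃ t', Run u v t w t' ∧ Rel R s' t' := by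
  induction h with
  | nil => exact fun h => ⟨_, .nil _, h⟩
  | @tau s s1 s2 w h _ ih =>
    rintro t ⟨P, Q, hP, hQ, hPQ⟩
    obtain ⟨P', h1, h2⟩ := rep_bwd hP h
    obtain ⟨Q', h3, h4⟩ := (hR P Q hPQ).1 _ _ h1
    rcases h3 with ⟨_, h3⟩ | ⟨h3, _⟩
    · obtain ⟨t', h5, h6⟩ := silent_run h3 hQ
      obtain ⟨t2, h7, h8⟩ := ih ⟨P', Q', h2, h6, h4⟩
      exact ⟨t2, h5.trans h7, h8⟩
    · exact absurd rfl h3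
  | @vis s s1 s2 ℓ w hl h _ ih =>
    rintro t ⟨P, Q, hP, hQ, hPQ⟩
    obtain ⟨P', h1, h2⟩ := rep_bwd hP h
    obtain ⟨Q', h3, h4⟩ := (hR P Q hPQ).1 _ _ h1
    rcases h3 with ⟨h3, _⟩ | ⟨_, Q1, Q2, h3, h3', h3''⟩
    · exact absurd h3 hl
    · obtain ⟨t1, h5, h6⟩ := silent_run h3 hQ
      obtain ⟨t2, h7, h8⟩ := rep_fwd h6 h3'
      obtain ⟨t3, h9, h10⟩ := silent_run h3'' h8
      obtain ⟨t4, h11, h12⟩ := ih ⟨P', Q', h2, h10, h4⟩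
      exact ⟨t4, h5.trans (.vis hl h7 (h9.trans h11)), h12⟩

/-! ### Shapes of threads -/

/-- All constants of the thread are of the form `Uᵢ`, `Vᵢ` or `W(ω,i)`. -/
def Tl (l : List (Cst n α)) : Prop := ∀ c ∈ l, isTail c = true

/-- The labels that tail constants can perform: `τ`, the indices and the letters. -/
def low : Lab n α → Bool
  | .tau | .idx _ | .ltr _ => true
  | _ => false

lemma Tl.cons {c : Cst n α} {l} (h : Tl (c :: l)) : isTail c = true ∧ Tl l := by
  simpa [Tl] using h

lemma Tl.append {l l' : List (Cst n α)} (h : Tl l) (h' : Tl l') : Tl (l ++ l') := by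
  intro c hc
  rcases List.mem_append.1 hc with hc | hc
  exacts [h c hc, h' c hc]

lemma Tl.mapU (is : List (Fin n)) : Tl (is.map (Cst.U (α := α))) := by
  intro c hc
  obtain ⟨i, _, rfl⟩ := List.mem_map.1 hc
  rfl

lemma Tl.mapV (is : List (Fin n)) : Tl (is.map (Cst.V (α := α))) := by
  intro c hc
  obtain ⟨i, _, rfl⟩ := List.mem_map.1 hc
  rfl

lemma TRule.tail {u v : Fin n → List α} {c : Cst n α} {ℓ r} (h : TRule u v c ℓ r)
    (hc : isTail c = true) : Tl r ∧ low ℓ = true := by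
  cases h <;> simp [isTail, Tl, low] at hc ⊢

lemma astep_inv {u v : Fin n → List α} {s s' : Conf n α} {ℓ} (h : AStep u v s ℓ s') :
    (∃ c m' x, s.1 = [c] ∧ MRule c ℓ m' x ∧ s' = (m', x + s.2)) ∨
    (∃ c l r T, s.2 = (c :: l) ::ₘ T ∧ TRule u v c ℓ r ∧ s' = (s.1, (r ++ l) ::ₘ T)) := by
  cases h with
  | main T h => exact .inl ⟨_, _, _, rfl, h, rfl⟩
  | thr m l T h => exact .inr ⟨_, _, _, _, rfl, h, rfl⟩

/-- Inversion of a transition relative to a distinguished thread `t`. -/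
lemma astep_inv_cons {u v : Fin n → List α} {m t T} {s' : Conf n α} {ℓ}
    (h : AStep u v (m, t ::ₘ T) ℓ s') :
    (∃ c m' x, m = [c] ∧ MRule c ℓ m' x ∧ s' = (m', t ::ₘ (x + T))) ∨
    (∃ c l r, t = c :: l ∧ TRule u v c ℓ r ∧ s' = (m, (r ++ l) ::ₘ T)) ∨
    (∃ c l r T0, T = (c :: l) ::ₘ T0 ∧ TRule u v c ℓ r ∧ s' = (m, t ::ₘ (r ++ l) ::ₘ T0)) := by
  rcases astep_inv h with ⟨c, m', x, h1, h2, h3⟩ | ⟨c, l, r, T0, h1, h2, h3⟩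
  · exact .inl ⟨c, m', x, h1, h2, by rw [h3]; simp⟩
  · simp only at h1 h3
    rcases Multiset.cons_eq_cons.1 h1 with ⟨rfl, rfl⟩ | ⟨_, cs, rfl, rfl⟩
    · exact .inr (.inl ⟨c, l, r, rfl, h2, h3⟩)
    · exact .inr (.inr ⟨c, l, r, cs, rfl, h2, by rw [h3, Multiset.cons_swap]⟩)

lemma thr_tau {u v : Fin n → List α} {c : Cst n α} {r l m T} (h : TRule u v c .tau r) :
    Run u v (m, (c :: l) ::ₘ T) [] (m, (r ++ l) ::ₘ T) :=
  .tau (.thr m l T h) (.nil _)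

lemma kill_W {u v : Fin n → List α} (ω : List α) (k : Option (Fin n)) {l m T} :
    Run u v (m, (.W ω k :: l) ::ₘ T) [] (m, l ::ₘ T) := by
  induction ω with
  | nil =>
    cases k with
    | none => exact thr_tau .wE
    | some i => exact (thr_tau (.wTi [] i)).trans (thr_tau .wE)
  | cons a ω ih => exact (thr_tau (.wTa a ω k)).trans ih

lemma kill_tail {u v : Fin n → List α} {t} (ht : Tl t) {m T} :
    Run u v (m, t ::ₘ T) [] (m, [] ::ₘ T) := by
  induction t with
  | nil => exact .nil _
  | cons c l ih =>
    obtain ⟨hc, hl⟩ := ht.cons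
    refine Run.trans (w := []) (s1 := (m, l ::ₘ T)) ?_ (ih hl)
    cases c <;> simp [isTail] at hc
    · exact (thr_tau (.uW _)).trans (kill_W _ _)
    · exact (thr_tau (.vW _)).trans (kill_W _ _)
    · exact kill_W _ _

/-- The threads that can arise from `C` without an action `λ_V`; `p` restricts the constants behind
an active `G_v`. -/
def ShB (p : Cst n α → Prop) (t : List (Cst n α)) : Prop :=
  Tl t ∨ ∃ l, Tl l ∧ (t = .G :: l ∨ (t = .Gv :: l ∧ ∀ c ∈ l, p c))

lemma ShB.step {u v : Fin n → List α} {p : Cst n α → Prop} (hp : ∀ i, p (.V i))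
    {c : Cst n α} {l ℓ r} (h : ShB p (c :: l)) (hr : TRule u v c ℓ r) :
    (low ℓ = true ∧ ShB p (r ++ l)) ∨
    (ℓ = .lV ∧ c = .Gv ∧ r = [.Z] ∧ Tl l ∧ ∀ c ∈ l, p c) := by
  rcases h with h | ⟨l', hl, h | ⟨h, hpl⟩⟩
  · obtain ⟨h1, h2⟩ := h.cons
    obtain ⟨h3, h4⟩ := hr.tail h1
    exact .inl ⟨h4, .inl (h3.append h2)⟩
  · obtain ⟨rfl, rfl⟩ := List.cons.inj h
    left
    cases hr with
    | gU i => exact ⟨rfl, .inr ⟨.U i :: l, by simpa [Tl, isTail] using hl, .inl rfl⟩⟩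
    | gV i => exact ⟨rfl, .inr ⟨.V i :: l, by simpa [Tl, isTail] using hl, .inl rfl⟩⟩
    | gE => exact ⟨rfl, .inl hl⟩
  · obtain ⟨rfl, rfl⟩ := List.cons.inj h
    cases hr with
    | gvT i =>
      exact .inl ⟨rfl, .inr ⟨.V i :: l, by simpa [Tl, isTail] using hl,
        .inr ⟨rfl, by simpa [hp i] using hpl⟩⟩⟩
    | gvE => exact .inl ⟨rfl, .inl hl⟩
    | gvV => exact .inr ⟨rfl, rfl, rfl, hl, hpl⟩

/-- Control constant `m`, and all threads of shape `ShB p`. -/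
def P0 (p : Cst n α → Prop) (m : Cst n α) (s : Conf n α) : Prop :=
  s.1 = [m] ∧ ∀ t ∈ s.2, ShB p t

/-- The control constants reached after `λ_D` and before `C'`. -/
def CIS (m : Cst n α) : Prop := m = .C ∨ m = .I ∨ m = .S

lemma MRule.cis {m : Cst n α} {ℓ m' x} (h : MRule m ℓ m' x) (hm : CIS m)
    (p : Cst n α → Prop) :
    ℓ ≠ .lZ ∧ ℓ ≠ .lV ∧ (low ℓ = true → m' = [m] ∧ ∀ t ∈ x, ShB p t) := by
  rcases hm with rfl | rfl | rfl <;> cases h <;> simp [low, ShB, Tl]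

lemma P0.step {u v : Fin n → List α} {p : Cst n α → Prop} (hp : ∀ i, p (.V i)) {m : Cst n α}
    (hm : CIS m) {s s' : Conf n α} {ℓ} (h : P0 p m s) (hs : AStep u v s ℓ s') :
    ℓ ≠ .lZ ∧ (low ℓ = true → P0 p m s') := by
  obtain ⟨h0, h1⟩ := h
  rcases astep_inv hs with ⟨c, m', x, h2, h3, rfl⟩ | ⟨c, l, r, T, h2, h3, rfl⟩
  · rw [h0] at h2
    cases h2
    obtain ⟨h4, -, h5⟩ := h3.cis hm p
    refine ⟨h4, fun hl => ⟨(h5 hl).1, fun t ht => ?_⟩⟩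
    rcases Multiset.mem_add.1 ht with ht | ht
    exacts [(h5 hl).2 t ht, h1 t ht]
  · rw [h2] at h1
    rcases (h1 _ (Multiset.mem_cons_self _ _)).step hp h3 with ⟨h4, h5⟩ | ⟨rfl, -⟩
    · refine ⟨(by rintro rfl; cases h4), fun _ => ⟨h0, fun t ht => ?_⟩⟩
      rcases Multiset.mem_cons.1 ht with rfl | ht
      exacts [h5, h1 t (Multiset.mem_cons_of_mem ht)]
    · exact ⟨by simp, by simp [low]⟩

lemma P0.run {u v : Fin n → List α} {p : Cst n α → Prop} (hp : ∀ i, p (.V i)) {m : Cst n α}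
    (hm : CIS m) {s s' : Conf n α} (h : P0 p m s) (hr : Run u v s [] s') : P0 p m s' :=
  Run.inv (fun _ _ h1 h2 => (h1.step hp hm h2).2 rfl) h hr

lemma P0.no_lZ {u v : Fin n → List α} {p : Cst n α → Prop} (hp : ∀ i, p (.V i)) {m : Cst n α}
    (hm : CIS m) {s s' : Conf n α} {w} (h : P0 p m s) : ¬ Run u v s (.lZ :: w) s' := by
  intro hr
  obtain ⟨s1, s2, h1, -, h2, -⟩ := hr.cons_inv
  exact ((h.run hp hm h1).step hp hm h2).1 rfl

/-- As `P0`, but with an additional thread `Z y`. -/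
def P1 (m : Cst n α) (y : List (Cst n α)) (s : Conf n α) : Prop :=
  ∃ T, s = ([m], (.Z :: y) ::ₘ T) ∧ ∀ t ∈ T, ShB (fun _ => True) t

/-- The thread `Z y` does not change before `Z` is consumed. -/
lemma P1.step_low {u v : Fin n → List α} {m : Cst n α} (hm : CIS m) {y} (hy : Tl y)
    {s s' : Conf n α} {ℓ} (hl : low ℓ = true) (h : P1 m y s) (hs : AStep u v s ℓ s') :
    P1 m y s' ∨ P0 (fun _ => True) m s' := by
  obtain ⟨T, rfl, h1⟩ := h
  rcases astep_inv_cons hs with ⟨c, m', x, h2, h3, rfl⟩ | ⟨c, l, r, h2, h3, rfl⟩ |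
    ⟨c, l, r, T0, rfl, h3, rfl⟩
  · cases h2
    obtain ⟨rfl, h5⟩ := (h3.cis hm (fun _ => True)).2.2 hl
    refine .inl ⟨_, rfl, fun t ht => ?_⟩
    rcases Multiset.mem_add.1 ht with ht | ht
    exacts [h5 t ht, h1 t ht]
  · cases h2
    right
    refine ⟨rfl, fun t ht => ?_⟩
    cases h3 with
    | zE =>
      rcases Multiset.mem_cons.1 ht with rfl | ht
      exacts [.inl hy, h1 t ht]
    | zZ => cases hl
  · left
    refine ⟨_, rfl, fun t ht => ?_⟩
    rcases (h1 _ (Multiset.mem_cons_self _ _)).step (fun _ => trivial) h3 with ⟨_, h5⟩ | ⟨rfl, -⟩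
    · rcases Multiset.mem_cons.1 ht with rfl | ht
      exacts [h5, h1 t (Multiset.mem_cons_of_mem ht)]
    · cases hl

/-- If `λ_Z` is still possible after silent moves, then `Z y` is still there. -/
lemma P1.run {u v : Fin n → List α} {m : Cst n α} (hm : CIS m) {y} (hy : Tl y)
    {s s' s'' : Conf n α} (h : P1 m y s) (hr : Run u v s [] s') (hz : Run u v s' [.lZ] s'') :
    P1 m y s' := by
  have := Run.inv (p := fun s => P1 m y s ∨ P0 (fun _ => True) m s) (fun a b h1 h2 => by
    rcases h1 with h1 | h1
    · exact h1.step_low hm hy rfl h2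
    · exact .inr ((h1.step (fun _ => trivial) hm h2).2 rfl)) (.inl h) hr
  exact this.resolve_right fun h => h.no_lZ (fun _ => trivial) hm hz

lemma P1.lZ_run {u v : Fin n → List α} {m : Cst n α} {y} {s : Conf n α} (h : P1 m y s) :
    ∃ s', Run u v s [.lZ] s' := by
  obtain ⟨T, rfl, -⟩ := h
  exact ⟨_, .vis (by simp) (.thr _ _ _ .zZ) (.nil _)⟩

lemma P1.step_C {u v : Fin n → List α} {m' : Cst n α} {ℓ}
    (hm : ℓ = .lI ∧ m' = .I ∨ ℓ = .lS ∧ m' = .S) {y} {s s' : Conf n α} (h : P1 .C y s)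
    (hs : AStep u v s ℓ s') : P1 m' y s' := by
  obtain ⟨T, rfl, h1⟩ := h
  rcases astep_inv_cons hs with ⟨c, m', x, h2, h3, rfl⟩ | ⟨c, l, r, h2, h3, rfl⟩ |
    ⟨c, l, r, T0, rfl, h3, rfl⟩
  · cases h2
    rcases hm with ⟨rfl, rfl⟩ | ⟨rfl, rfl⟩ <;> cases h3 <;> exact ⟨T, by simp, h1⟩
  · rcases hm with ⟨rfl, rfl⟩ | ⟨rfl, rfl⟩ <;> cases h3
  · rcases hm with ⟨rfl, rfl⟩ | ⟨rfl, rfl⟩ <;> cases h3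

/-! ### Reading off the word of the thread guarded by `Z` -/

/-- `(m, q, ob)` is an observation mode: while `m` is in control, the labels satisfying `q` are
performed by tail constants only, and `ob c` is the longest word of such labels that the tail
constant `c` performs. -/
structure IsMode (u v : Fin n → List α) (m : Cst n α) (q : Lab n α → Prop)
    (ob : Cst n α → List (Lab n α)) : Prop where
  cis : CIS m
  main : ∀ {ℓ m' x}, MRule m ℓ m' x → ¬ q ℓ ∧ ℓ ≠ .tau ∧ ℓ ≠ .lZ
  q_low : ∀ {ℓ}, q ℓ → low ℓ = true ∧ ℓ ≠ .tau
  rule_tau : ∀ {c r}, isTail c = true → TRule u v c .tau r → (r.flatMap ob).Sublist (ob c)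
  rule_q : ∀ {c r ℓ}, isTail c = true → TRule u v c ℓ r → q ℓ →
    (ℓ :: r.flatMap ob).Sublist (ob c)
  full : ∀ {c l mm T}, isTail c = true →
    Run u v (mm, (c :: l) ::ₘ T) (ob c) (mm, l ::ₘ T)
  ob_q : ∀ {c ℓ}, isTail c = true → ℓ ∈ ob c → q ℓ

section Mode

variable {u v : Fin n → List α} {m : Cst n α} {q : Lab n α → Prop}
  {ob : Cst n α → List (Lab n α)}

lemma IsMode.full_list (h : IsMode u v m q ob) {y mm T} (hy : Tl y) :
    Run u v (mm, y ::ₘ T) (y.flatMap ob) (mm, [] ::ₘ T) := by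
  induction y with
  | nil => exact .nil _
  | cons c l ih => exact (h.full hy.cons.1).trans (ih hy.cons.2)

/-- The threads `T` perform no nonempty word of labels satisfying `q`. -/
def Quiet (u v : Fin n → List α) (m : Cst n α) (q : Lab n α → Prop)
    (T : Multiset (List (Cst n α))) : Prop :=
  ∀ w s, (∀ ℓ ∈ w, q ℓ) → Run u v ([m], T) w s → w = []

lemma Quiet.thr {T} {c : Cst n α} {l r} (h : Quiet u v m q ((c :: l) ::ₘ T))
    (hr : TRule u v c .tau r) : Quiet u v m q ((r ++ l) ::ₘ T) :=
  fun w s hw hs => h w s hw (.tau (.thr _ _ _ hr) hs)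

lemma Quiet.not_q {T} {c : Cst n α} {l r ℓ} (h : Quiet u v m q ((c :: l) ::ₘ T))
    (hl : ℓ ≠ .tau) (hr : TRule u v c ℓ r) : ¬ q ℓ := by
  intro hq
  exact absurd (h [ℓ] _ (by simpa using hq) (.vis hl (.thr _ _ _ hr) (.nil _))) (by simp)

/-- Next to quiet threads, the words performed are those of the thread `y`. -/
lemma IsMode.run_sublist (h : IsMode u v m q ob) {s s' : Conf n α} {w} (hr : Run u v s w s') :
    ∀ {y T}, s = ([m], y ::ₘ T) → Tl y → Quiet u v m q T → (∀ ℓ ∈ w, q ℓ) →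
      w.Sublist (y.flatMap ob) := by
  induction hr with
  | nil => exact fun _ _ _ _ => List.nil_sublist _
  | tau hs _ ih =>
    rintro y T rfl hy hT hw
    rcases astep_inv_cons hs with ⟨c, m', x, h2, h3, rfl⟩ | ⟨c, l, r, rfl, h3, rfl⟩ |
      ⟨c, l, r, T0, rfl, h3, rfl⟩
    · cases h2
      exact absurd rfl (h.main h3).2.1
    · refine (ih rfl ((h3.tail hy.cons.1).1.append hy.cons.2) hT hw).trans ?_
      rw [List.flatMap_append, List.flatMap_cons]
      exact (h.rule_tau hy.cons.1 h3).append (.refl _)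
    · exact ih rfl hy (hT.thr h3) hw
  | vis hl hs _ ih =>
    rintro y T rfl hy hT hw
    rw [List.forall_mem_cons] at hw
    rcases astep_inv_cons hs with ⟨c, m', x, h2, h3, rfl⟩ | ⟨c, l, r, rfl, h3, rfl⟩ |
      ⟨c, l, r, T0, rfl, h3, rfl⟩
    · cases h2
      exact absurd hw.1 (h.main h3).1
    · have h4 := ih rfl ((h3.tail hy.cons.1).1.append hy.cons.2) hT hw.2
      rw [List.flatMap_append] at h4
      refine (h4.cons_cons _).trans ?_
      rw [List.flatMap_cons, ← List.cons_append]
      exact (h.rule_q hy.cons.1 h3 hw.1).append (.refl _)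
    · exact absurd hw.1 (hT.not_q hl h3)

/-- As `P1`, with quiet threads next to `Z y`. -/
def P1q (u v : Fin n → List α) (m : Cst n α) (q : Lab n α → Prop) (y : List (Cst n α))
    (s : Conf n α) : Prop :=
  ∃ T, s = ([m], (.Z :: y) ::ₘ T) ∧ (∀ t ∈ T, ShB (fun _ => True) t) ∧ Quiet u v m q T

lemma P1q.run (h : IsMode u v m q ob) {y} (hy : Tl y) {s s' : Conf n α}
    (hs : P1q u v m q y s) (hr : Run u v s [] s') :
    P1q u v m q y s' ∨ P0 (fun _ => True) m s' := by
  refine Run.inv (p := fun s => P1q u v m q y s ∨ P0 (fun _ => True) m s) ?_ (.inl hs) hr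
  rintro s s' (⟨T, rfl, h1, hT⟩ | h1) h2
  · rcases astep_inv_cons h2 with ⟨c, m', x, e, h3, rfl⟩ | ⟨c, l, r, e, h3, rfl⟩ |
      ⟨c, l, r, T0, rfl, h3, rfl⟩
    · cases e
      exact absurd rfl (h.main h3).2.1
    · cases e
      cases h3
      refine .inr ⟨rfl, fun t ht => ?_⟩
      rcases Multiset.mem_cons.1 ht with rfl | ht
      exacts [.inl hy, h1 t ht]
    · refine .inl ⟨_, rfl, fun t ht => ?_, hT.thr h3⟩
      rcases (h1 _ (Multiset.mem_cons_self _ _)).step (fun _ => trivial) h3 with ⟨_, h5⟩ | ⟨h, -⟩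
      · rcases Multiset.mem_cons.1 ht with rfl | ht
        exacts [h5, h1 t (Multiset.mem_cons_of_mem ht)]
      · cases h
  · exact .inr ((h1.step (fun _ => trivial) h.cis h2).2 rfl)

/-- A label satisfying `q` can only be performed at the expense of `λ_Z`. -/
lemma P1q.no_run (h : IsMode u v m q ob) {y} (hy : Tl y) {s s' : Conf n α} {ℓ}
    (hq : q ℓ) (hs : P1q u v m q y s) : ¬ Run u v s [ℓ, .lZ] s' := by
  intro hr
  obtain ⟨s1, s2, h1, hl, h2, h3⟩ := hr.cons_inv
  rcases hs.run h hy h1 with ⟨T, rfl, h4, hT⟩ | h4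
  · rcases astep_inv_cons h2 with ⟨c, m', x, e, h5, rfl⟩ | ⟨c, l, r, e, h5, rfl⟩ |
      ⟨c, l, r, T0, rfl, h5, rfl⟩
    · cases e
      exact absurd hq (h.main h5).1
    · cases e
      have := (h.q_low hq).1
      cases h5
      · exact hl rfl
      · cases this
    · exact absurd hq (hT.not_q hl h5)
  · exact ((h4.step (fun _ => trivial) h.cis h2).2 (h.q_low hq).1).no_lZ (fun _ => trivial)
      h.cis h3

lemma P1q.sublist (h : IsMode u v m q ob) {y} (hy : Tl y) {s s' : Conf n α} {w}
    (hw : ∀ ℓ ∈ w, q ℓ) (hs : P1q u v m q y s) (hr : Run u v s (.lZ :: w) s') :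
    w.Sublist (y.flatMap ob) := by
  obtain ⟨s1, s2, h1, hl, h2, h3⟩ := hr.cons_inv
  rcases hs.run h hy h1 with ⟨T, rfl, h4, hT⟩ | h4
  · rcases astep_inv_cons h2 with ⟨c, m', x, e, h5, rfl⟩ | ⟨c, l, r, e, h5, rfl⟩ |
      ⟨c, l, r, T0, rfl, h5, rfl⟩
    · cases e
      exact absurd rfl (h.main h5).2.2
    · cases e
      cases h5
      exact h.run_sublist h3 rfl hy hT hw
    · rcases (h4 _ (Multiset.mem_cons_self _ _)).step (fun _ => trivial) h5 with ⟨h, _⟩ | ⟨h, -⟩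
        <;> cases h
  · exact absurd rfl (h4.step (fun _ => trivial) h.cis h2).1

lemma P1q.word (h : IsMode u v m q ob) {y} (hy : Tl y) {s : Conf n α}
    (hs : P1q u v m q y s) : ∃ s', Run u v s (.lZ :: y.flatMap ob) s' := by
  obtain ⟨T, rfl, -⟩ := hs
  exact ⟨_, .vis (by simp) (.thr _ _ _ .zZ) (h.full_list hy)⟩

/-- In an observation mode, related configurations guard the same word by their `Z`. -/
lemma P1q.eq (h : IsMode u v m q ob) {R : Proc n α → Proc n α → Prop}
    (hR : IsWeakBisim (GTrans u v) .tau R) {y y'} (hy : Tl y) (hy' : Tl y') {s s' : Conf n α}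
    (hs : P1q u v m q y s) (hs' : P1 m y' s') (hrel : Rel R s s') :
    y.flatMap ob = y'.flatMap ob := by
  have hq : ∀ {z : List (Cst n α)}, Tl z → ∀ ℓ ∈ z.flatMap ob, q ℓ := by
    intro z hz ℓ hl
    obtain ⟨c, hc, hl⟩ := List.mem_flatMap.1 hl
    exact h.ob_q (hz c hc) hl
  have hs'' : P1q u v m q y' s' := by
    obtain ⟨T, rfl, h1⟩ := hs'
    refine ⟨T, rfl, h1, fun w s2 hw hr => ?_⟩
    -- A nonempty word of `T` could be followed by the action `λ_Z` of the thread `Z y'`.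
    cases w with
    | nil => rfl
    | cons ℓ w =>
      exfalso
      rw [List.forall_mem_cons] at hw
      obtain ⟨a, b, h2, hl, h3, -⟩ := hr.cons_inv
      have h4 := (h2.trans (.vis hl h3 (.nil _))).frame (.Z :: y')
      have h5 := h4.trans (.vis (by simp) (.thr b.1 y' b.2 .zZ) (.nil _))
      obtain ⟨s3, h6, -⟩ := Rel.run (bisim_flip hR) h5 hrel.flip
      exact hs.no_run h hy hw.1 h6
  obtain ⟨s1, h1⟩ := hs.word h hy
  obtain ⟨s2, h2⟩ := hs''.word h hy'
  obtain ⟨t1, h3, -⟩ := Rel.run hR h1 hrel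
  obtain ⟨t2, h4, -⟩ := Rel.run (bisim_flip hR) h2 hrel.flip
  exact (hs''.sublist h hy' (hq hy) h3).antisymm (hs.sublist h hy (hq hy') h4)

end Mode

/-- The letters performed by a tail constant. -/
def obI (u v : Fin n → List α) : Cst n α → List (Lab n α)
  | .U i => (u i).map .ltr
  | .V i => (v i).map .ltr
  | .W ω _ => ω.map .ltr
  | _ => []

/-- The index performed by a tail constant. -/
def obS : Cst n α → List (Lab n α)
  | .U i => [.idx i]
  | .V i => [.idx i]
  | .W _ (some i) => [.idx i]
  | _ => []

lemma full_I {u v : Fin n → List α} (ω : List α) (k : Option (Fin n)) {l m T} :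
    Run u v (m, (.W ω k :: l) ::ₘ T) (ω.map .ltr) (m, l ::ₘ T) := by
  induction ω with
  | nil => exact kill_W _ _
  | cons a ω ih => exact .vis (by simp) (.thr _ _ _ (.wA a ω k)) ih

/-- While `I` absorbs the indices, the letters are observed. -/
lemma mode_I (u v : Fin n → List α) :
    IsMode u v .I (fun ℓ => ∃ a, ℓ = .ltr a) (obI u v) where
  cis := .inr (.inl rfl)
  main h := by cases h <;> simp
  q_low := by rintro _ ⟨a, rfl⟩; simp [low]
  rule_tau hc h := by cases h <;> simp [isTail, obI] at hc ⊢
  rule_q hc h hq := by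
    obtain ⟨a, rfl⟩ := hq
    cases h
    simp [obI]
  full {c l mm T} hc := by
    cases c <;> simp [isTail] at hc
    · exact (thr_tau (.uW _)).trans (full_I _ _)
    · exact (thr_tau (.vW _)).trans (full_I _ _)
    · exact full_I _ _
  ob_q {c ℓ} hc h := by
    cases c <;> simp [isTail, obI] at hc h <;> obtain ⟨a, -, rfl⟩ := h <;> exact ⟨a, rfl⟩

lemma full_S {u v : Fin n → List α} (ω : List α) (i : Fin n) {l m T} :
    Run u v (m, (.W ω (some i) :: l) ::ₘ T) [.idx i] (m, l ::ₘ T) :=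
  .vis (by simp) (.thr _ _ _ (.wI ω i)) (kill_W _ _)

/-- While `S` absorbs the letters, the indices are observed. -/
lemma mode_S (u v : Fin n → List α) :
    IsMode u v .S (fun ℓ => ∃ i, ℓ = .idx i) obS where
  cis := .inr (.inr rfl)
  main h := by cases h <;> simp
  q_low := by rintro _ ⟨a, rfl⟩; simp [low]
  rule_tau hc h := by
    cases h with
    | wTa a ω k => cases k <;> simp [obS]
    | _ => simp [isTail, obS] at hc ⊢
  rule_q hc h hq := by
    obtain ⟨a, rfl⟩ := hq
    cases h
    simp [obS]
  full {c l mm T} hc := by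
    cases c with
    | U i => exact (thr_tau (.uW _)).trans (full_S _ _)
    | V i => exact (thr_tau (.vW _)).trans (full_S _ _)
    | W ω k =>
      cases k with
      | none => exact kill_W _ _
      | some i => exact full_S _ _
    | _ => simp [isTail] at hc
  ob_q {c ℓ} hc h := by
    cases c with
    | W ω k => cases k <;> simp [obS] at h ⊢; simp [h]
    | _ => simp [isTail, obS] at hc h <;> simp [h]

/-! ### Answers of `Y` to the first action `λ_U` -/

/-- The threads that `D` generates without an action `λ_U`. -/
def ShA (t : List (Cst n α)) : Prop :=
  Tl t ∨ ∃ h l, t = h :: l ∧ Tl l ∧ (h = .Gv' ∨ h = .Z ∨ (h = .Gu ∧ ∃ is : List (Fin n), l = is.map Cst.U))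

lemma ShA.step {u v : Fin n → List α} {c : Cst n α} {l ℓ r} (h : ShA (c :: l))
    (hr : TRule u v c ℓ r) : (ℓ = .tau → ShA (r ++ l)) ∧ ℓ ≠ .lV ∧
      (ℓ = .lU → ∃ is : List (Fin n), is ≠ [] ∧ r ++ l = .Gv :: is.map Cst.U) := by
  rcases h with h | ⟨h, l', h1, hl, h2⟩
  · obtain ⟨h1, h2⟩ := h.cons
    obtain ⟨h3, h4⟩ := hr.tail h1
    refine ⟨fun _ => .inl (h3.append h2), ?_, ?_⟩
    · rintro rfl; cases h4
    · rintro rfl; cases h4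
  · obtain ⟨rfl, rfl⟩ := List.cons.inj h1
    rcases h2 with rfl | rfl | ⟨rfl, is, rfl⟩
    · cases hr with
      | gvpT i =>
        refine ⟨fun _ => .inr ⟨.Gv', .V i :: l, rfl, ?_, .inl rfl⟩, by simp, by simp⟩
        simpa [Tl, isTail] using hl
      | gvpZ => exact ⟨fun _ => .inr ⟨.Z, l, rfl, hl, .inr (.inl rfl)⟩, by simp, by simp⟩
    · cases hr with
      | zE => exact ⟨fun _ => .inl hl, by simp, by simp⟩
      | zZ => exact ⟨by simp, by simp, by simp⟩
    · cases hr with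
      | guT i =>
        exact ⟨fun _ => .inr ⟨.Gu, (i :: is).map Cst.U, rfl, .mapU _, .inr (.inr ⟨rfl, _, rfl⟩)⟩,
          by simp, by simp⟩
      | guU i => exact ⟨by simp, by simp, fun _ => ⟨i :: is, by simp, rfl⟩⟩
      | guGvp => exact ⟨fun _ => .inr ⟨.Gv', _, rfl, hl, .inl rfl⟩, by simp, by simp⟩

lemma ShA.kill {u v : Fin n → List α} {t : List (Cst n α)} (h : ShA t) {m T} :
    Run u v (m, t ::ₘ T) [] (m, [] ::ₘ T) := by
  have hz : ∀ {l}, Tl l → Run u v (m, (.Z :: l) ::ₘ T) [] (m, [] ::ₘ T) :=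
    fun hl => (thr_tau .zE).trans (kill_tail hl)
  have hv : ∀ {l}, Tl l → Run u v (m, (.Gv' :: l) ::ₘ T) [] (m, [] ::ₘ T) :=
    fun hl => (thr_tau .gvpZ).trans (hz hl)
  rcases h with h | ⟨h, l, rfl, hl, rfl | rfl | ⟨rfl, -⟩⟩
  · exact kill_tail h
  · exact hv hl
  · exact hz hl
  · exact (thr_tau .guGvp).trans (hv hl)

lemma kill_all {u v : Fin n → List α} (m : List (Cst n α)) (T : Multiset (List (Cst n α)))
    (h : ∀ t ∈ T, ShA t) : ∃ E, (∀ t ∈ E, t = []) ∧ Run u v (m, T) [] (m, E) := by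
  induction T using Multiset.induction with
  | empty => exact ⟨0, by simp, .nil _⟩
  | cons t T ih =>
    obtain ⟨E, h1, h2⟩ := ih fun t ht => h t (Multiset.mem_cons_of_mem ht)
    refine ⟨[] ::ₘ E, by simpa using h1, ?_⟩
    exact (h2.frame t).trans (w' := []) (h t (Multiset.mem_cons_self _ _)).kill

/-- Control constant `D`, and all threads of shape `ShA`; `λ_V` is then impossible before `λ_U`. -/
def Post0 (s : Conf n α) : Prop := s.1 = [.D] ∧ ∀ t ∈ s.2, ShA t

/-- A thread `G_v V_{j₁} … U_{i₁} …` with at least one `U`, and otherwise threads that can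
terminate silently. -/
def Post1 (s : Conf n α) : Prop :=
  ∃ (js is : List (Fin n)) (T : Multiset (List (Cst n α))), is ≠ [] ∧ s = ([.D], (.Gv :: (js.map Cst.V ++ is.map Cst.U)) ::ₘ T) ∧
    ∀ t ∈ T, ShA t

lemma ShA.gu : ShA [(.Gu : Cst n α)] :=
  .inr ⟨.Gu, [], rfl, by simp [Tl], .inr (.inr ⟨rfl, [], rfl⟩)⟩

lemma Post0.step {u v : Fin n → List α} {s s' : Conf n α} {ℓ} (h : Post0 s)
    (hs : AStep u v s ℓ s') :
    (ℓ = .tau → Post0 s') ∧ ℓ ≠ .lV ∧ (ℓ = .lU → Post1 s') := by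
  obtain ⟨h0, h1⟩ := h
  rcases astep_inv hs with ⟨c, m', x, h2, h3, rfl⟩ | ⟨c, l, r, T, h2, h3, rfl⟩
  · rw [h0] at h2
    cases h2
    cases h3 with
    | dT =>
      refine ⟨fun _ => ⟨rfl, fun t ht => ?_⟩, by simp, by simp⟩
      rcases Multiset.mem_add.1 ht with ht | ht
      · rw [Multiset.mem_singleton.1 ht]; exact .gu
      · exact h1 t ht
    | dD => simp
  · rw [h2] at h1
    obtain ⟨h4, h5, h6⟩ := (h1 _ (Multiset.mem_cons_self _ _)).step h3
    refine ⟨fun hl => ⟨h0, fun t ht => ?_⟩, h5, fun hl => ?_⟩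
    · rcases Multiset.mem_cons.1 ht with rfl | ht
      exacts [h4 hl, h1 t (Multiset.mem_cons_of_mem ht)]
    · obtain ⟨is, h7, h8⟩ := h6 hl
      exact ⟨[], is, T, h7, by rw [h0, h8]; rfl, fun t ht => h1 t (Multiset.mem_cons_of_mem ht)⟩

lemma Post1.step {u v : Fin n → List α} {s s' : Conf n α} (h : Post1 s)
    (hs : AStep u v s .tau s') : Post1 s' ∨ Post0 s' := by
  obtain ⟨js, is, T, his, rfl, h1⟩ := h
  rcases astep_inv_cons hs with ⟨c, m', x, e, h3, rfl⟩ | ⟨c, l, r, e, h3, rfl⟩ |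
    ⟨c, l, r, T0, rfl, h3, rfl⟩
  · cases e
    cases h3
    refine .inl ⟨js, is, _, his, rfl, fun t ht => ?_⟩
    rcases Multiset.mem_add.1 ht with ht | ht
    · rw [Multiset.mem_singleton.1 ht]; exact .gu
    · exact h1 t ht
  · cases e
    cases h3 with
    | gvT i => exact .inl ⟨i :: js, is, T, his, rfl, h1⟩
    | gvE =>
      refine .inr ⟨rfl, fun t ht => ?_⟩
      rcases Multiset.mem_cons.1 ht with rfl | ht
      exacts [.inl ((Tl.mapV _).append (.mapU _)), h1 t ht]
  · refine .inl ⟨js, is, _, his, rfl, fun t ht => ?_⟩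
    rcases Multiset.mem_cons.1 ht with rfl | ht
    exacts [((h1 _ (Multiset.mem_cons_self _ _)).step h3).1 rfl,
      h1 t (Multiset.mem_cons_of_mem ht)]

/-- After answering `λ_U` in such a way that `λ_V` stays possible, `Y` has guessed a nonempty
sequence of `U`-constants. -/
lemma Y_answer {u v : Fin n → List α} {t t' : Conf n α}
    (h : Run u v ([.Y], 0) [.lU] t) (hV : Run u v t [.lV] t') : Post1 t := by
  obtain ⟨s1, s2, h1, -, h2, h3⟩ := h.cons_inv
  have h4 : s1 = ([.Y], 0) ∨ Post0 s1 := by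
    refine Run.inv (p := fun s => s = ([.Y], 0) ∨ Post0 s) ?_ (.inl rfl) h1
    rintro s s' (rfl | hs) hst
    · rcases astep_inv hst with ⟨c, m', x, e, h3, rfl⟩ | ⟨c, l, r, T, e, h3, rfl⟩
      · cases e
        cases h3
        exact .inr ⟨rfl, by simp⟩
      · exact absurd e.symm Multiset.cons_ne_zero
    · exact .inr ((hs.step hst).1 rfl)
  have h5 : Post1 s2 := by
    rcases h4 with rfl | h4
    · rcases astep_inv h2 with ⟨c, m', x, e, h3, rfl⟩ | ⟨c, l, r, T, e, h3, rfl⟩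
      · cases e
        cases h3
      · exact absurd e.symm Multiset.cons_ne_zero
    · exact (h4.step h2).2.2 rfl
  have h6 : Post1 t ∨ Post0 t := by
    refine Run.inv (p := fun s => Post1 s ∨ Post0 s) ?_ (.inl h5) h3
    rintro s s' (hs | hs) hst
    · exact hs.step hst
    · exact .inr ((hs.step hst).1 rfl)
  refine h6.resolve_right fun h7 => ?_
  obtain ⟨s3, s4, h8, -, h9, -⟩ := hV.cons_inv
  have h10 : Post0 s3 := Run.inv (fun a b ha hab => (ha.step hab).1 rfl) h7 h8
  exact (h10.step h9).2.1 rfl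

/-! ### Answers of `D ‖ G_v` -/

/-- The threads that `D ‖ G_v` and its successor `C ‖ G_v` generate without an action `λ_U`
or `λ_V`. -/
def ShL (t : List (Cst n α)) : Prop :=
  ShB (fun c => ∃ i, c = .V i) t ∨ ∃ h l, t = h :: l ∧ Tl l ∧ (h = .Gu ∨ h = .Gv' ∨ h = .Z)

lemma ShL.step {u v : Fin n → List α} {c : Cst n α} {l r} (h : ShL (c :: l))
    (hr : TRule u v c .tau r) : ShL (r ++ l) := by
  rcases h with h | ⟨h, l', h1, hl, h2⟩
  · rcases h.step (fun i => ⟨i, rfl⟩) hr with ⟨-, h⟩ | ⟨h, -⟩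
    · exact .inl h
    · cases h
  · obtain ⟨rfl, rfl⟩ := List.cons.inj h1
    have hc : ∀ {d}, isTail d = true → Tl (d :: l) := fun hd => by simpa [Tl, hd] using hl
    rcases h2 with rfl | rfl | rfl
    · cases hr with
      | guT i => exact .inr ⟨.Gu, .U i :: l, rfl, hc rfl, .inl rfl⟩
      | guGvp => exact .inr ⟨.Gv', l, rfl, hl, .inr (.inl rfl)⟩
    · cases hr with
      | gvpT i => exact .inr ⟨.Gv', .V i :: l, rfl, hc rfl, .inr (.inl rfl)⟩
      | gvpZ => exact .inr ⟨.Z, l, rfl, hl, .inr (.inr rfl)⟩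
    · cases hr with
      | zE => exact .inl (.inl hl)

/-- Control constant `m`, and all threads of shape `ShL`. -/
def PL (m : Cst n α) (s : Conf n α) : Prop := s.1 = [m] ∧ ∀ t ∈ s.2, ShL t

lemma PL.step {u v : Fin n → List α} {m : Cst n α} (hm : m = .D ∨ m = .C) {s s' : Conf n α}
    (h : PL m s) (hs : AStep u v s .tau s') : PL m s' := by
  obtain ⟨h0, h1⟩ := h
  rcases astep_inv hs with ⟨c, m', x, h2, h3, rfl⟩ | ⟨c, l, r, T, h2, h3, rfl⟩
  · rw [h0] at h2
    cases h2
    have h4 : m' = [m] ∧ ∀ t ∈ x, ShL t := by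
      rcases hm with rfl | rfl <;> cases h3 <;> simp [ShL, ShB, Tl]
    refine ⟨h4.1, fun t ht => ?_⟩
    rcases Multiset.mem_add.1 ht with ht | ht
    exacts [h4.2 t ht, h1 t ht]
  · rw [h2] at h1
    refine ⟨h0, fun t ht => ?_⟩
    rcases Multiset.mem_cons.1 ht with rfl | ht
    exacts [(h1 _ (Multiset.mem_cons_self _ _)).step h3, h1 t (Multiset.mem_cons_of_mem ht)]

/-- If `D ‖ G_v` answers `λ_D` without making `λ_Z` available, then behind each remaining `G_v`
there are only constants `Vᵢ`. -/
lemma L2_shape {u v : Fin n → List α} {s : Conf n α}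
    (h : Run u v ([.D], {[.Gv]}) [.lD] s) (hz : ∀ s', ¬ Run u v s [.lZ] s') :
    P0 (fun c => ∃ i, c = .V i) .C s := by
  obtain ⟨s1, s2, h1, -, h2, h3⟩ := h.cons_inv
  have h4 : PL .D s1 := Run.inv (fun a b => PL.step (.inl rfl))
    ⟨rfl, by simp [ShL, ShB, Tl]⟩ h1
  have h5 : PL .C s2 := by
    obtain ⟨h5, h6⟩ := h4
    rcases astep_inv h2 with ⟨c, m', x, e, h7, rfl⟩ | ⟨c, l, r, T, e, h7, rfl⟩
    · rw [h5] at e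
      cases e
      cases h7
      exact ⟨rfl, by simpa using h6⟩
    · cases h7
  have h6 : PL .C s := Run.inv (fun a b => PL.step (.inr rfl)) h5 h3
  refine ⟨h6.1, fun t ht => (h6.2 t ht).resolve_right ?_⟩
  -- A thread headed by `G_u`, `G_v'` or `Z` would make `λ_Z` possible.
  rintro ⟨h, l, rfl, hl, hh⟩
  obtain ⟨T, hT⟩ := Multiset.exists_cons_of_mem ht
  obtain ⟨m, T'⟩ := s
  simp only at hT
  subst hT
  have hZ : ∃ s', Run u v (m, (.Z :: l) ::ₘ T) [.lZ] s' :=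
    ⟨_, .vis (by simp) (.thr _ _ _ .zZ) (.nil _)⟩
  obtain ⟨s', hZ⟩ := hZ
  have hV : Run u v (m, (.Gv' :: l) ::ₘ T) [.lZ] s' := (thr_tau .gvpZ).trans hZ
  rcases hh with rfl | rfl | rfl
  · exact hz s' ((thr_tau .guGvp).trans hV)
  · exact hz s' hV
  · exact hz s' hZ

lemma ShB.weaken {p : Cst n α → Prop} {t} (h : ShB p t) : ShB (fun _ => True) t := by
  rcases h with h | ⟨l, hl, h | ⟨h, -⟩⟩
  · exact .inl h
  · exact .inr ⟨l, hl, .inl h⟩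
  · exact .inr ⟨l, hl, .inr ⟨h, by simp⟩⟩

/-- A subsequent `λ_V` after which `λ_Z` is possible leaves a thread `Z V_{w₁} V_{w₂} …`. -/
lemma L3_shape {u v : Fin n → List α} {s s' s'' : Conf n α}
    (hs : P0 (fun c => ∃ i, c = .V i) .C s) (h : Run u v s [.lV] s')
    (hz : Run u v s' [.lZ] s'') : ∃ ws : List (Fin n), P1 .C (ws.map Cst.V) s' := by
  obtain ⟨s1, s2, h1, -, h2, h3⟩ := h.cons_inv
  have hp : ∀ i : Fin n, ∃ j, (Cst.V i : Cst n α) = .V j := fun i => ⟨i, rfl⟩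
  obtain ⟨h4, h5⟩ := hs.run hp (.inl rfl) h1
  suffices ∃ ws : List (Fin n), P1 .C (ws.map Cst.V) s2 by
    obtain ⟨ws, h6⟩ := this
    exact ⟨ws, h6.run (.inl rfl) (.mapV _) h3 hz⟩
  rcases astep_inv h2 with ⟨c, m', x, e, h7, rfl⟩ | ⟨c, l, r, T, e, h7, rfl⟩
  · rw [h4] at e
    cases e
    cases h7
  · rw [e] at h5
    rcases (h5 _ (Multiset.mem_cons_self _ _)).step hp h7 with ⟨h, -⟩ | ⟨-, rfl, rfl, hl, hV⟩
    · cases h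
    · have : ∃ ws : List (Fin n), l = ws.map Cst.V := by
        clear e h5 hl h2 h3
        induction l with
        | nil => exact ⟨[], rfl⟩
        | cons c l ih =>
          rw [List.forall_mem_cons] at hV
          obtain ⟨i, rfl⟩ := hV.1
          obtain ⟨ws, rfl⟩ := ih hV.2
          exact ⟨i :: ws, rfl⟩
      obtain ⟨ws, rfl⟩ := this
      exact ⟨ws, T, by rw [h4]; rfl, fun t ht => (h5 t (Multiset.mem_cons_of_mem ht)).weaken⟩

/-- A subsequent choice of the test, after which `λ_Z` is still possible, keeps the thread `Z y`. -/
lemma L4_shape {u v : Fin n → List α} {m : Cst n α} {ℓ}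
    (hm : ℓ = .lI ∧ m = .I ∨ ℓ = .lS ∧ m = .S) {y} (hy : Tl y) {s s' s'' : Conf n α}
    (hs : P1 .C y s) (h : Run u v s [ℓ] s') (hz : Run u v s' [.lZ] s'') : P1 m y s' := by
  obtain ⟨s1, s2, h1, -, h2, h3⟩ := h.cons_inv
  have hcis : CIS m := by
    rcases hm with ⟨-, rfl⟩ | ⟨-, rfl⟩
    exacts [.inr (.inl rfl), .inr (.inr rfl)]
  rcases Run.inv (p := fun s => P1 .C y s ∨ P0 (fun _ => True) .C s) (fun a b h1 h2 => by
    rcases h1 with h1 | h1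
    · exact h1.step_low (.inl rfl) hy rfl h2
    · exact .inr ((h1.step (fun _ => trivial) (.inl rfl) h2).2 rfl)) (.inl hs) h1 with h4 | h4
  · exact (h4.step_C hm h2).run hcis hy h3 hz
  · exfalso
    obtain ⟨h5, h6⟩ := h4
    have h7 : P0 (fun _ => True) m s2 := by
      rcases astep_inv h2 with ⟨c, m', x, e, h7, rfl⟩ | ⟨c, l, r, T, e, h7, rfl⟩
      · rw [h5] at e
        cases e
        rcases hm with ⟨rfl, rfl⟩ | ⟨rfl, rfl⟩ <;> cases h7 <;> exact ⟨rfl, by simpa using h6⟩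
      · rcases hm with ⟨rfl, rfl⟩ | ⟨rfl, rfl⟩ <;> cases h7
    exact (h7.run (fun _ => trivial) hcis h3).no_lZ (fun _ => trivial) hcis hz

/-! ### The distinguishing strategy -/

lemma quiet_nil {u v : Fin n → List α} {m : Cst n α} {q ob} (h : IsMode u v m q ob)
    {E : Multiset (List (Cst n α))} (hE : ∀ t ∈ E, t = []) : Quiet u v m q E := by
  have key : ∀ {ℓ s}, AStep u v ([m], E) ℓ s → ¬ q ℓ ∧ ℓ ≠ .tau := by
    intro ℓ s hs
    rcases astep_inv hs with ⟨c, m', x, e, h7, rfl⟩ | ⟨c, l, r, T, e, h7, rfl⟩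
    · cases e
      exact ⟨(h.main h7).1, (h.main h7).2.1⟩
    · simp only at e
      subst e
      exact absurd (hE _ (Multiset.mem_cons_self _ _)) (by simp)
  intro w s hw hr
  cases hr with
  | nil => rfl
  | tau h1 _ => exact absurd rfl (key h1).2
  | vis _ h1 _ => exact absurd (hw _ (by simp)) (key h1).1

/-- Configurations `C ‖ Z y` and `C ‖ Z y' ‖ …` can be related only if `y` and `y'` have the same
observation in each of the two tests. -/
lemma final_eq {u v : Fin n → List α} {m : Cst n α} {q ob} (h : IsMode u v m q ob) {ℓ : Lab n α}
    (hm : ℓ = .lI ∧ m = .I ∨ ℓ = .lS ∧ m = .S) {R : Proc n α → Proc n α → Prop}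
    (hR : IsWeakBisim (GTrans u v) .tau R) {y y' E} (hy : Tl y) (hy' : Tl y')
    (hE : ∀ t ∈ E, t = []) {s : Conf n α} (hs : P1 .C y' s)
    (hrel : Rel R ([.C], (.Z :: y) ::ₘ E) s) : y.flatMap ob = y'.flatMap ob := by
  have hq : P1q u v m q y ([m], (.Z :: y) ::ₘ E) :=
    ⟨E, rfl, fun t ht => .inl (by simp [hE t ht, Tl]), quiet_nil h hE⟩
  have h1 : Run u v ([.C], (.Z :: y) ::ₘ E) [ℓ] ([m], (.Z :: y) ::ₘ E) := by
    rcases hm with ⟨rfl, rfl⟩ | ⟨rfl, rfl⟩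
    · simpa using Run.vis (by simp) (AStep.main (u := u) (v := v) ((.Z :: y) ::ₘ E) .cI) (.nil _)
    · simpa using Run.vis (by simp) (AStep.main (u := u) (v := v) ((.Z :: y) ::ₘ E) .cS) (.nil _)
  obtain ⟨s', h2, h3⟩ := Rel.run hR h1 hrel
  obtain ⟨s'', h4⟩ : ∃ s'', Run u v ([m], (.Z :: y) ::ₘ E) [.lZ] s'' :=
    ⟨_, .vis (by simp) (.thr _ _ _ .zZ) (.nil _)⟩
  obtain ⟨s3, h5, -⟩ := Rel.run hR h4 h3
  exact hq.eq h hR hy hy' (L4_shape hm hy' hs h2 h5) h3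

lemma flatMap_obI (u v : Fin n → List α) (js is : List (Fin n)) :
    (js.map Cst.V ++ is.map Cst.U).flatMap (obI u v) =
      ((js.map v).flatten ++ (is.map u).flatten).map Lab.ltr := by
  simp [obI, List.flatMap_def, List.map_flatten, Function.comp_def]

lemma flatMap_obS (js is : List (Fin n)) :
    (js.map Cst.V ++ is.map Cst.U).flatMap (obS (α := α)) = (js ++ is).map Lab.idx := by
  have h : ∀ l : List (Fin n), l.flatMap (fun i => [(Lab.idx i : Lab n α)]) = l.map Lab.idx := by
    intro l
    induction l with
    | nil => rfl
    | cons a l ih => simpa using ih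
  simp [List.flatMap_map, obS, h]

end PCPGame

open PCPGame in
/-- Lemma 9 of the paper: if the PCP instance has no solution then `¬ (X ≈ Y)`. -/
theorem no_solution_implies_not_weak {n : ℕ} {α : Type} [Fintype α]
    (u v : Fin n → List α) (hu : ∀ i, u i ≠ []) (hv : ∀ i, v i ≠ [])
    (hnosol : ¬ HasSolution u v) :
    ¬ WkBisim (GTrans u v) Lab.tau (K Cst.X) (K Cst.Y) := by
  rintro ⟨R, hR, hXY⟩
  have hR' := bisim_flip hR
  have h0 : Rel R ([.X], 0) ([.Y], 0) := by
    refine ⟨_, _, ⟨⟨.inr ⟨.X, rfl, rfl⟩, by simp⟩, NF.main1 _⟩,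
      ⟨⟨.inr ⟨.Y, rfl, rfl⟩, by simp⟩, NF.main1 _⟩, hXY⟩
  have h1 : Run u v ([.X], 0) [.lU] ([.D], {[.Gv]}) := .vis (by simp) (.main 0 .xU) (.nil _)
  obtain ⟨t, h2, h3⟩ := Rel.run hR h1 h0
  -- `Y` has to answer `λ_U` by guessing a nonempty index sequence `is`.
  have h4 : Run u v ([.D], {[.Gv]}) [.lV] ([.D], {[.Z]}) :=
    .vis (by simp) (.thr [.D] [] 0 .gvV) (.nil _)
  obtain ⟨t', h5, -⟩ := Rel.run hR h4 h3
  obtain ⟨js, is, T, his, rfl, hT⟩ := Y_answer h2 h5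
  have hx : Tl (js.map Cst.V ++ is.map (Cst.U (α := α))) := (Tl.mapV _).append (.mapU _)
  -- From now on the attack is on the side of `Y`, after all superfluous threads have terminated.
  obtain ⟨E, hE, h6⟩ := kill_all (u := u) (v := v) [.D] T hT
  have h7 : Run u v ([.D], (.Gv :: (js.map Cst.V ++ is.map Cst.U)) ::ₘ T) [.lD]
      ([.C], (.Gv :: (js.map Cst.V ++ is.map Cst.U)) ::ₘ E) := by
    refine (h6.frame _).trans (w := []) (.vis (by simp) (.main _ .dD) ?_)
    rw [zero_add]
    exact .nil _
  obtain ⟨L2, h8, h9⟩ := Rel.run hR' h7 h3.flip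
  have hR2 : P0 (fun _ => True) .C
      ([.C], (.Gv :: (js.map Cst.V ++ is.map (Cst.U (α := α)))) ::ₘ E) := by
    refine ⟨rfl, fun t ht => ?_⟩
    rcases Multiset.mem_cons.1 ht with rfl | ht
    · exact .inr ⟨_, hx, .inr ⟨rfl, by simp⟩⟩
    · exact .inl (by simp [hE t ht, Tl])
  have h10 := L2_shape h8 fun s' hs' => by
    obtain ⟨s'', h, -⟩ := Rel.run hR hs' h9.flip
    exact hR2.no_lZ (fun _ => trivial) (.inl rfl) h
  have h11 : Run u v ([.C], (.Gv :: (js.map Cst.V ++ is.map Cst.U)) ::ₘ E) [.lV]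
      ([.C], (.Z :: (js.map Cst.V ++ is.map Cst.U)) ::ₘ E) :=
    .vis (by simp) (.thr _ _ _ .gvV) (.nil _)
  obtain ⟨L3, h12, h13⟩ := Rel.run hR' h11 h9
  have h14 : Run u v ([.C], (.Z :: (js.map Cst.V ++ is.map Cst.U)) ::ₘ E) [.lZ]
      ([.C], (js.map Cst.V ++ is.map Cst.U) ::ₘ E) :=
    .vis (by simp) (.thr _ _ _ .zZ) (.nil _)
  obtain ⟨L3', h15, -⟩ := Rel.run hR' h14 h13
  obtain ⟨ws, h16⟩ := L3_shape h10 h12 h15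
  -- Both tests, of the letters and of the indices, are available in the same configuration.
  have hI := final_eq (mode_I u v) (.inl ⟨rfl, rfl⟩) hR' hx (.mapV ws) hE h16 h13
  have hS := final_eq (mode_S u v) (.inr ⟨rfl, rfl⟩) hR' hx (.mapV ws) hE h16 h13
  have e1 := flatMap_obI u v ws []
  have e2 := flatMap_obS (α := α) ws []
  simp only [List.map_nil, List.append_nil, List.flatten_nil] at e1 e2
  rw [flatMap_obI, e1] at hI
  rw [flatMap_obS, e2] at hS
  have hI' := List.map_injective_iff.2 (fun a b h => by cases h; rfl) hI
  have hS' := List.map_injective_iff.2 (fun a b h => by cases h; rfl) hS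
  rw [← hS', List.map_append, List.flatten_append, List.append_cancel_left_eq] at hI'
  exact hnosol ⟨is, his, hI'⟩
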